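/- arXiv:2404.16643 — 3 statements merged into one kernel-verified Lean document; each statement's English description precedes it below -/
import Mathlib

section
/- Let L be a finite lattice and let (D_*(L), δ_*) be the tensor square of the multichain complex, i.e. D_n(L) = ⊕_{i+j+1=n} M̃_i(L) ⊗ M̃_j(L) with differential δ_n = ⊕_{i+j+1=n}((∂_i ⊗ id) + (−1)^{i+1}(id ⊗ ∂_j)). Then the K-linear map ⧢ : D_n(L) → M̃_n(L) induced by c ⊗ c′ ↦ c ⧢ c′ is a chain map: for every n ≥ 0 and every α ∈ D_n(L), ∂_n(⧢(α)) = ⧢(δ_n(α)). -/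
open Finsupp

noncomputable section

variable (K : Type) [Field K] (L : Type) [SemilatticeSup L]

/-- Order multichains with `n` entries (length `n - 1`) in the lattice `L`:
weakly decreasing tuples `(c₀ ≥ c₁ ≥ ⋯ ≥ c_{n-1})`. -/
def MChain (n : ℕ) : Type := {c : Fin n → L // Antitone c}

/-- `∂ₖ^{(j)}`: deletion of the `k`-th entry of an order multichain. -/
def mdel {n : ℕ} (k : Fin (n + 1)) (c : MChain L (n + 1)) : MChain L n :=
  ⟨c.1 ∘ k.succAbove, c.2.comp_monotone (Fin.strictMono_succAbove k).monotone⟩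

/-- Concatenation `c · c′` of tuples. -/
def concatT {a b n : ℕ} (h : a + b = n) (u : Fin a → L) (v : Fin b → L) : Fin n → L :=
  fun r => if hr : (r : ℕ) < a then u ⟨r, hr⟩ else v ⟨(r : ℕ) - a, by have := r.2; omega⟩

/-- The operator `τ` sending a tuple `(a₀, …, a_{n-1})` to the multichain
`(a₀ ∨ ⋯ ∨ a_{n-1} ≥ a₁ ∨ ⋯ ∨ a_{n-1} ≥ ⋯ ≥ a_{n-1})` of suffix joins. -/
def tauMul {n : ℕ} (a : Fin n → L) : MChain L n :=
  ⟨fun r => (Finset.Ici r).sup' ⟨r, Finset.mem_Ici.mpr le_rfl⟩ a, by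
    intro r r' hrr'
    apply Finset.sup'_le
    intro s hs
    exact Finset.le_sup' _ (Finset.mem_Ici.mpr (le_trans hrr' (Finset.mem_Ici.mp hs)))⟩

/-- An `(i,j)`-shuffle, in block form: `IsShuffleBlocks t σ` says that the permutation `σ`
is monotone on the preimage of the values `{0, …, t-1}` (the first block) and on the
preimage of the remaining values (the second block).  An `(i,j)`-shuffle of
`{0, 1, …, i+j+1}` is exactly `IsShuffleBlocks (i+1)`. -/
def IsShuffleBlocks {n : ℕ} (t : ℕ) (σ : Equiv.Perm (Fin n)) : Prop :=
  (∀ p q : Fin n, p < q → (σ p : ℕ) < t → (σ q : ℕ) < t → σ p < σ q) ∧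
  (∀ p q : Fin n, p < q → t ≤ (σ p : ℕ) → t ≤ (σ q : ℕ) → σ p < σ q)

/-- The index `ℓ - 1` (with the convention `0 - 1 = 0`). -/
def prevIdx {n : ℕ} (ℓ : Fin n) : Fin n := ⟨(ℓ : ℕ) - 1, by have := ℓ.2; omega⟩

/-- The set `A₁^{i,j}` of pairs `(ℓ, σ)` with `σ` an `(i,j)`-shuffle, `ℓ ≥ 1`,
`σ(ℓ-1) ∈ {0,…,i}` and `σ(ℓ) ∈ {i+1,…,i+j+1}`. -/
def shuffleA1 (i j : ℕ) : Set (Fin (i + j + 2) × Equiv.Perm (Fin (i + j + 2))) :=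
  {p | IsShuffleBlocks (i + 1) p.2 ∧ 1 ≤ (p.1 : ℕ) ∧
       (p.2 (prevIdx p.1) : ℕ) ≤ i ∧ i + 1 ≤ (p.2 p.1 : ℕ)}

/-- The set `A₂^{i,j}` of pairs `(ℓ, σ)` with `σ` an `(i,j)`-shuffle, `ℓ ≥ 1`,
`σ(ℓ-1) ∈ {i+1,…,i+j+1}` and `σ(ℓ) ∈ {0,…,i}`. -/
def shuffleA2 (i j : ℕ) : Set (Fin (i + j + 2) × Equiv.Perm (Fin (i + j + 2))) :=
  {p | IsShuffleBlocks (i + 1) p.2 ∧ 1 ≤ (p.1 : ℕ) ∧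
       i + 1 ≤ (p.2 (prevIdx p.1) : ℕ) ∧ (p.2 p.1 : ℕ) ≤ i}

/-- The set `A₃^{i,j}` of pairs `(ℓ, σ)` with `σ` an `(i,j)`-shuffle and
`σ(ℓ-1), σ(ℓ) ∈ {0,…,i}`, the condition on `σ(ℓ-1)` being regarded as true for `ℓ = 0`. -/
def shuffleA3 (i j : ℕ) : Set (Fin (i + j + 2) × Equiv.Perm (Fin (i + j + 2))) :=
  {p | IsShuffleBlocks (i + 1) p.2 ∧
       (1 ≤ (p.1 : ℕ) → (p.2 (prevIdx p.1) : ℕ) ≤ i) ∧ (p.2 p.1 : ℕ) ≤ i}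

/-- `M̃`: the `K`-vector space with basis the order multichains with `n` entries
(length `n-1`).  In particular `MGrp K L 0 ≅ K` is `M̃₋₁`, spanned by the empty
multichain. -/
abbrev MGrp (n : ℕ) : Type := MChain L n →₀ K

/-- The simplicial boundary `∂ = Σ (-1)^j ∂^{(j)}` on multichains. -/
def mbdry (n : ℕ) : MGrp K L (n + 1) →ₗ[K] MGrp K L n :=
  Finsupp.lsum K fun c => ∑ k : Fin (n + 1), ((-1 : K) ^ (k : ℕ)) • Finsupp.lsingle (mdel L k c)

/-- Transport along an equality of lengths. -/
def castMGrp {a b : ℕ} (h : a = b) : MGrp K L a ≃ₗ[K] MGrp K L b :=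
  Finsupp.domLCongr (Equiv.cast (congrArg (MChain L) h))

open Classical in
/-- The shuffle product of two basis multichains, with `p` resp. `q` entries:
`c ⧢ c′ = Σ_{σ ∈ S_{p-1,q-1}} sgn(σ) · τ((c·c′)_σ)`. -/
def shufPair {p q : ℕ} (c : MChain L p) (c' : MChain L q) : MGrp K L (p + q) :=
  ∑ σ : Equiv.Perm (Fin (p + q)),
    if IsShuffleBlocks p σ then
      ((Equiv.Perm.sign σ : ℤ) : K) • Finsupp.single (tauMul L (concatT L rfl c.1 c'.1 ∘ ⇑σ)) 1
    else 0

/-- The shuffle product `⧢ : M̃_{p-1} ⊗ M̃_{q-1} → M̃_{p+q-1}` as a bilinear map. -/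
def shufLin (p q : ℕ) : MGrp K L p →ₗ[K] MGrp K L q →ₗ[K] MGrp K L (p + q) :=
  Finsupp.lsum K fun c =>
    LinearMap.toSpanSingleton K _
      (Finsupp.lsum K fun c' => LinearMap.toSpanSingleton K _ (shufPair K L c c'))

open DirectSum TensorProduct

/-- Index set of the direct sum `D`: pairs of entry-counts `(p, q)` with `p + q = n`.
The summand `(p, q)` is `M̃_{p-1} ⊗ M̃_{q-1}`, so `Dmod K L (n+1)` is the paper's
`D_n(L) = ⊕_{i+j+1=n} M̃_i(L) ⊗ M̃_j(L)`. -/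
abbrev DIdx (n : ℕ) : Type := {pq : ℕ × ℕ // pq.1 + pq.2 = n}

/-- The tensor square `D` of the multichain complex (in entry-count grading). -/
abbrev Dmod (n : ℕ) : Type :=
  ⨁ pq : DIdx n, (MGrp K L pq.1.1 ⊗[K] MGrp K L pq.1.2)

/-- The component `(∂ ⊗ id)` of the differential of `D`, from the summand `(p, q)` of
`Dmod (n+1)`; it is zero when `p = 0` (there `∂ : M̃₋₁ → M̃₋₂ = 0`). -/
def deltaLeft (n : ℕ) : (pq : DIdx (n + 1)) →
    (MGrp K L pq.1.1 ⊗[K] MGrp K L pq.1.2) →ₗ[K] Dmod K L n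
  | ⟨(0, _), _⟩ => 0
  | ⟨(p + 1, q), h⟩ =>
      (DirectSum.lof K (DIdx n) _ ⟨(p, q), by omega⟩).comp
        (TensorProduct.map (mbdry K L p) LinearMap.id)

/-- The component `(-1)^{i+1} (id ⊗ ∂)` of the differential of `D`, from the summand
`(p, q)` (with `p = i + 1`, so the sign is `(-1)^p`); it is zero when `q = 0`. -/
def deltaRight (n : ℕ) : (pq : DIdx (n + 1)) →
    (MGrp K L pq.1.1 ⊗[K] MGrp K L pq.1.2) →ₗ[K] Dmod K L n
  | ⟨(_, 0), _⟩ => 0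
  | ⟨(p, q + 1), h⟩ =>
      ((-1 : K) ^ p) •
        (DirectSum.lof K (DIdx n) _ ⟨(p, q), by omega⟩).comp
          (TensorProduct.map LinearMap.id (mbdry K L q))

/-- The differential `δ = (∂ ⊗ id) + (-1)^{i+1} (id ⊗ ∂)` of the tensor square complex. -/
def deltaD (n : ℕ) : Dmod K L (n + 1) →ₗ[K] Dmod K L n :=
  DirectSum.toModule K (DIdx (n + 1)) _ fun pq => deltaLeft K L n pq + deltaRight K L n pq

/-- The total shuffle map `⧢ : D_n(L) → M̃_n(L)`, induced by `c ⊗ c′ ↦ c ⧢ c′` on each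
summand. -/
def shuffleTotal (n : ℕ) : Dmod K L n →ₗ[K] MGrp K L n :=
  DirectSum.toModule K (DIdx n) _ fun pq =>
    (castMGrp K L pq.2).toLinearMap.comp (TensorProduct.lift (shufLin K L pq.1.1 pq.1.2))

/-!
The boundary of a shuffle product is a signed sum over pairs `(k, σ)` of a deleted position `k` and
a shuffle `σ`. If `σ` places entries of different blocks at positions `k - 1` and `k`, exchanging
these two entries gives another shuffle of opposite sign, and since deleting entry `k` from the
suffix joins leaves a multichain that does not see the order of the two, such terms cancel.
Otherwise the `k`-th entry of the tuple lies below the previous one, or is the first, so that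
deleting the `k`-th suffix join amounts to deleting the entry `m = σ k` before taking suffix joins.
What remains is a shuffle of the tuple without `m`, and for each `m` each such shuffle arises once:
`m` must be put back directly after its predecessor in its block, or at the front if there is none.
The sign changes by `(-1) ^ (k + m)`, which leaves the alternating sum over the deleted entries `m`;
those of the first block give `∂ ⊗ id` and those of the second give `± id ⊗ ∂`.
-/

section InsertPerm

variable {n : ℕ}

/-- The permutation of `Fin (n + 1)` sending `k` to `m` and acting as `s` on the remaining
indices, both its domain minus `k` and its codomain minus `m` being identified with `Fin n`. -/
def insertPerm (k m : Fin (n + 1)) (s : Equiv.Perm (Fin n)) : Equiv.Perm (Fin (n + 1)) :=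
  m.cycleRange⁻¹ * Equiv.Perm.decomposeFin.symm (0, s) * k.cycleRange

theorem insertPerm_apply_self (k m : Fin (n + 1)) (s : Equiv.Perm (Fin n)) :
    insertPerm k m s k = m := by
  simp [insertPerm, Equiv.Perm.inv_def]

theorem insertPerm_apply_succAbove (k m : Fin (n + 1)) (s : Equiv.Perm (Fin n)) (x : Fin n) :
    insertPerm k m s (k.succAbove x) = m.succAbove (s x) := by
  simp [insertPerm, Equiv.Perm.inv_def]

theorem insertPerm_comp_succAbove (k m : Fin (n + 1)) (s : Equiv.Perm (Fin n)) :
    insertPerm k m s ∘ k.succAbove = m.succAbove ∘ s :=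
  funext (insertPerm_apply_succAbove k m s)

theorem sign_insertPerm (k m : Fin (n + 1)) (s : Equiv.Perm (Fin n)) :
    Equiv.Perm.sign (insertPerm k m s) = (-1) ^ (k : ℕ) * ((-1) ^ (m : ℕ) * Equiv.Perm.sign s) := by
  simp [insertPerm, mul_comm]

theorem insertPerm_bijective (k : Fin (n + 1)) :
    Function.Bijective fun x : Fin (n + 1) × Equiv.Perm (Fin n) => insertPerm k x.1 x.2 := by
  refine (Fintype.bijective_iff_injective_and_card _).2
    ⟨?_, by simp [Fintype.card_perm, Nat.factorial_succ]⟩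
  rintro ⟨m, s⟩ ⟨m', s'⟩ h
  obtain rfl : m = m' := by
    simpa only [insertPerm_apply_self] using DFunLike.congr_fun h k
  refine Prod.ext rfl (Equiv.ext fun x => m.succAbove_right_injective ?_)
  simpa only [insertPerm_apply_succAbove] using DFunLike.congr_fun h (k.succAbove x)

theorem sum_perm_eq_sum_insertPerm {M : Type*} [AddCommMonoid M] (k : Fin (n + 1))
    (f : Equiv.Perm (Fin (n + 1)) → M) :
    ∑ σ, f σ = ∑ m, ∑ s, f (insertPerm k m s) := by
  rw [← Fintype.sum_prod_type']
  exact ((insertPerm_bijective k).sum_comp f).symm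

end InsertPerm

section BlockShuffle

variable {β : Type*} {n : ℕ}

/-- Shuffles of an arbitrary partition into blocks, given by a labelling `b` of the values: `σ` is
monotone on the preimage of each block. -/
def IsBlockShuffle {α : Type*} [LT α] (b : α → β) (σ : Equiv.Perm α) : Prop :=
  ∀ ⦃x y⦄, x < y → b (σ x) = b (σ y) → σ x < σ y

instance {α : Type*} [LT α] (b : α → β) (σ : Equiv.Perm α) : Decidable (IsBlockShuffle b σ) :=
  Classical.propDecidable _

theorem IsBlockShuffle.le_iff_le {α : Type*} [LinearOrder α] {b : α → β} {σ : Equiv.Perm α}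
    (h : IsBlockShuffle b σ) {x y : α} (hb : b (σ x) = b (σ y)) : σ x ≤ σ y ↔ x ≤ y := by
  refine ⟨fun hle => not_lt.1 fun hlt => (h hlt hb.symm).not_ge hle, fun hle => ?_⟩
  rcases hle.eq_or_lt with rfl | hlt
  · exact le_rfl
  · exact (h hlt hb).le

theorem IsBlockShuffle.lt_iff_lt {α : Type*} [LinearOrder α] {b : α → β} {σ : Equiv.Perm α}
    (h : IsBlockShuffle b σ) {x y : α} (hb : b (σ x) = b (σ y)) : σ x < σ y ↔ x < y := by
  simpa only [not_le] using (h.le_iff_le hb.symm).not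

/-- The condition on `(k, σ)` that position `k` does not border a change of blocks on its left: it
is `0`, or positions `k - 1` and `k` hold entries of the same block. For two blocks these pairs are
`shuffleA3` together with its analogue for the second block, and the remaining ones are `shuffleA1`
and `shuffleA2`. -/
def SameBlockAt (b : Fin (n + 1) → β) (k : Fin (n + 1)) (σ : Equiv.Perm (Fin (n + 1))) : Prop :=
  ∀ j : Fin n, k = j.succ → b (σ j.castSucc) = b (σ k)

instance (b : Fin (n + 1) → β) (k : Fin (n + 1)) (σ : Equiv.Perm (Fin (n + 1))) :
    Decidable (SameBlockAt b k σ) :=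
  Classical.propDecidable _

theorem sameBlockAt_zero (b : Fin (n + 1) → β) (σ : Equiv.Perm (Fin (n + 1))) :
    SameBlockAt b 0 σ :=
  fun j hj => absurd hj j.succ_ne_zero.symm

theorem sameBlockAt_succ_iff {b : Fin (n + 1) → β} {j : Fin n} {σ : Equiv.Perm (Fin (n + 1))} :
    SameBlockAt b j.succ σ ↔ b (σ j.castSucc) = b (σ j.succ) := by
  simp [SameBlockAt]

theorem IsBlockShuffle.mul_swap {b : Fin (n + 1) → β} {σ : Equiv.Perm (Fin (n + 1))}
    (h : IsBlockShuffle b σ) {j : Fin n} (hj : b (σ j.castSucc) ≠ b (σ j.succ)) :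
    IsBlockShuffle b (σ * Equiv.swap j.castSucc j.succ) := by
  intro x y hxy hb
  by_cases hlt : Equiv.swap j.castSucc j.succ x < Equiv.swap j.castSucc j.succ y
  · exact h hlt hb
  · -- Adjacent transpositions reverse the order of no other pair of positions.
    obtain ⟨rfl, rfl⟩ : x = j.castSucc ∧ y = j.succ := by
      simp only [Equiv.swap_apply_def, Fin.ext_iff, Fin.lt_def, Fin.val_castSucc,
        Fin.val_succ] at hxy hlt ⊢
      grind
    simp [hj.symm] at hb

theorem isBlockShuffle_insertPerm_iff {b : Fin (n + 1) → β} {k m : Fin (n + 1)}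
    {s : Equiv.Perm (Fin n)} :
    IsBlockShuffle b (insertPerm k m s) ↔
      IsBlockShuffle (b ∘ m.succAbove) s ∧
        ∀ x, b (m.succAbove (s x)) = b m → (m.succAbove (s x) < m ↔ k.succAbove x < k) := by
  constructor
  · intro h
    refine ⟨fun x y hxy hb => ?_, fun x hb => ?_⟩
    · have hlt := h (k.strictMono_succAbove hxy)
      simp only [insertPerm_apply_succAbove, Fin.succAbove_lt_succAbove_iff] at hlt
      exact hlt hb
    · have hlt := h.lt_iff_lt (x := k.succAbove x) (y := k)
      simp only [insertPerm_apply_succAbove, insertPerm_apply_self] at hlt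
      exact hlt hb
  · rintro ⟨h, h'⟩
    simp only [IsBlockShuffle, Fin.forall_iff_succAbove k, insertPerm_apply_succAbove,
      insertPerm_apply_self, Fin.succAbove_lt_succAbove_iff]
    refine ⟨⟨fun hlt => absurd hlt (lt_irrefl k), fun y hlt hb => ?_⟩,
      fun x => ⟨fun hlt hb => (h' x hb).2 hlt, fun y hlt hb => h hlt hb⟩⟩
    exact (m.succAbove_ne _).symm.lt_of_le (not_lt.1 fun hm => hlt.not_gt ((h' y hb.symm).1 hm))

theorem sameBlockAt_insertPerm_iff {b : Fin (n + 1) → β} {k m : Fin (n + 1)}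
    {s : Equiv.Perm (Fin n)} :
    SameBlockAt b k (insertPerm k m s) ↔
      ∀ j : Fin n, k = j.succ → b (m.succAbove (s j)) = b m := by
  refine forall_congr' fun j => imp_congr_right ?_
  rintro rfl
  rw [← Fin.succAbove_succ_self, insertPerm_apply_succAbove, insertPerm_apply_self]

open Classical in
/-- The position immediately after all entries of `s` which lie in the block of `m` and are smaller
than `m`: the place for `m` in a block shuffle where it directly follows an entry of its own block
or comes first. -/
def insertPos (b : Fin (n + 1) → β) (m : Fin (n + 1)) (s : Equiv.Perm (Fin n)) : Fin (n + 1) :=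
  ({x | b (m.succAbove (s x)) = b m ∧ m.succAbove (s x) < m} : Finset (Fin n)).sup Fin.succ

theorem lt_insertPos_iff {b : Fin (n + 1) → β} {k m : Fin (n + 1)} {s : Equiv.Perm (Fin n)} :
    k < insertPos b m s ↔
      ∃ x, (b (m.succAbove (s x)) = b m ∧ m.succAbove (s x) < m) ∧ k < x.succ := by
  simp [insertPos, Finset.lt_sup_iff]

theorem insertPos_le_iff {b : Fin (n + 1) → β} {k m : Fin (n + 1)} {s : Equiv.Perm (Fin n)} :
    insertPos b m s ≤ k ↔
      ∀ x, b (m.succAbove (s x)) = b m → m.succAbove (s x) < m → x.succ ≤ k := by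
  simp [insertPos]

theorem isBlockShuffle_and_sameBlockAt_insertPerm_iff {b : Fin (n + 1) → β} {k m : Fin (n + 1)}
    {s : Equiv.Perm (Fin n)} :
    IsBlockShuffle b (insertPerm k m s) ∧ SameBlockAt b k (insertPerm k m s) ↔
      IsBlockShuffle (b ∘ m.succAbove) s ∧ k = insertPos b m s := by
  rw [isBlockShuffle_insertPerm_iff, sameBlockAt_insertPerm_iff, and_assoc]
  simp only [Fin.succAbove_lt_iff_castSucc_lt k]
  refine and_congr_right fun hs => ⟨fun ⟨hlt, hsame⟩ => le_antisymm ?_ ?_, ?_⟩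
  · rcases k.eq_zero_or_eq_succ with rfl | ⟨j, rfl⟩
    · exact Fin.zero_le _
    · have hj := hsame j rfl
      exact Fin.castSucc_lt_iff_succ_le.1 <| lt_insertPos_iff.2
        ⟨j, ⟨hj, (hlt j hj).2 Fin.castSucc_lt_succ⟩, Fin.castSucc_lt_succ⟩
  · exact insertPos_le_iff.2 fun x hx hxm => Fin.castSucc_lt_iff_succ_le.1 ((hlt x hx).1 hxm)
  · rintro rfl
    refine ⟨fun x hx => ⟨fun hxm => lt_insertPos_iff.2 ⟨x, ⟨hx, hxm⟩, Fin.castSucc_lt_succ⟩,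
      fun hpos => ?_⟩, fun j hj => ?_⟩
    · obtain ⟨y, ⟨hy, hym⟩, hxy⟩ := lt_insertPos_iff.1 hpos
      have hle : s x ≤ s y := (hs.le_iff_le (hx.trans hy.symm)).2 (Fin.castSucc_lt_succ_iff.1 hxy)
      exact (Fin.succAbove_le_succAbove_iff.2 hle).trans_lt hym
    · obtain ⟨y, ⟨hy, hym⟩, hjy⟩ := lt_insertPos_iff.1 (hj ▸ Fin.castSucc_lt_succ (i := j))
      have hyj : y ≤ j := Fin.succ_le_succ_iff.1 (insertPos_le_iff.1 hj.le y hy hym)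
      rwa [← hyj.antisymm (Fin.castSucc_lt_succ_iff.1 hjy)]

theorem sum_sameBlockAt_eq_sum_insertPerm {M : Type*} [AddCommMonoid M] (b : Fin (n + 1) → β)
    (f : Fin (n + 1) → Equiv.Perm (Fin (n + 1)) → M) :
    ∑ k, ∑ σ with IsBlockShuffle b σ ∧ SameBlockAt b k σ, f k σ =
      ∑ m, ∑ s with IsBlockShuffle (b ∘ m.succAbove) s,
        f (insertPos b m s) (insertPerm (insertPos b m s) m s) := by
  simp only [Finset.sum_filter]
  calc ∑ k, ∑ σ, (if IsBlockShuffle b σ ∧ SameBlockAt b k σ then f k σ else 0)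
      = ∑ k, ∑ m, ∑ s, if IsBlockShuffle (b ∘ m.succAbove) s ∧ k = insertPos b m s then
          f k (insertPerm k m s) else 0 := by
        refine Finset.sum_congr rfl fun k _ => (sum_perm_eq_sum_insertPerm k _).trans ?_
        simp only [isBlockShuffle_and_sameBlockAt_insertPerm_iff]
    _ = ∑ m, ∑ s, ∑ k, if IsBlockShuffle (b ∘ m.succAbove) s ∧ k = insertPos b m s then
          f k (insertPerm k m s) else 0 := by
        rw [Finset.sum_comm]
        exact Finset.sum_congr rfl fun m _ => Finset.sum_comm
    _ = _ := by simp [ite_and]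

end BlockShuffle

section SuffixJoin

variable {L} {n : ℕ}

theorem tauMul_apply_le_iff {a : Fin n → L} {r : Fin n} {z : L} :
    (tauMul L a).1 r ≤ z ↔ ∀ x, r ≤ x → a x ≤ z :=
  (Finset.sup'_le_iff Finset.nonempty_Ici a).trans (by simp only [Finset.mem_Ici])

theorem mdel_tauMul_apply_le_iff {k : Fin (n + 1)} {a : Fin (n + 1) → L} {r : Fin n} {z : L} :
    (mdel L k (tauMul L a)).1 r ≤ z ↔ ∀ x, k.succAbove r ≤ x → a x ≤ z :=
  tauMul_apply_le_iff

theorem mdel_tauMul {k : Fin (n + 1)} {a : Fin (n + 1) → L}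
    (ha : ∀ j : Fin n, k = j.succ → a k ≤ a j.castSucc) :
    mdel L k (tauMul L a) = tauMul L (a ∘ k.succAbove) := by
  refine Subtype.ext (funext fun r => eq_of_forall_ge_iff fun z => ?_)
  simp only [mdel_tauMul_apply_le_iff, tauMul_apply_le_iff, Fin.forall_iff_succAbove k,
    Fin.succAbove_le_succAbove_iff, Function.comp_apply, and_iff_right_iff_imp]
  intro h hr
  have hlt : k.succAbove r < k := (k.succAbove_ne r).lt_of_le hr
  rcases k.eq_zero_or_eq_succ with rfl | ⟨j, rfl⟩
  · exact absurd hlt (Fin.not_lt_zero _)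
  · have hrj : r ≤ j := by
      rwa [Fin.succAbove_lt_iff_castSucc_lt, Fin.castSucc_lt_succ_iff] at hlt
    exact (ha j rfl).trans (by simpa using h j hrj)

theorem le_swap_castSucc_succ_iff {j : Fin n} {c : Fin (n + 1)} (hc : c ≠ j.succ)
    (x : Fin (n + 1)) : c ≤ Equiv.swap j.castSucc j.succ x ↔ c ≤ x := by
  simp only [Equiv.swap_apply_def, ne_eq, Fin.ext_iff, Fin.le_def, Fin.val_castSucc,
    Fin.val_succ] at hc ⊢
  grind

theorem mdel_succ_tauMul_comp_swap (j : Fin n) (a : Fin (n + 1) → L) :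
    mdel L j.succ (tauMul L (a ∘ Equiv.swap j.castSucc j.succ)) =
      mdel L j.succ (tauMul L a) := by
  refine Subtype.ext (funext fun r => eq_of_forall_ge_iff fun z => ?_)
  simp only [mdel_tauMul_apply_le_iff]
  refine (Equiv.swap j.castSucc j.succ).forall_congr fun x => ?_
  rw [le_swap_castSucc_succ_iff (j.succ.succAbove_ne r), Function.comp_apply]

end SuffixJoin

section ShuffleSum

variable {L} {β : Type*} {n : ℕ}

/-- The signed sum of the multichains `τ(a_σ)` over all shuffles `σ` of the blocks of `b`. -/
def shuffleSum (b : Fin n → β) (a : Fin n → L) : MGrp K L n :=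
  ∑ σ with IsBlockShuffle b σ,
    ((Equiv.Perm.sign σ : ℤ) : K) • Finsupp.single (tauMul L (a ∘ σ)) 1

theorem mbdry_single (c : MChain L (n + 1)) :
    mbdry K L n (Finsupp.single c 1) =
      ∑ k : Fin (n + 1), (-1 : K) ^ (k : ℕ) • Finsupp.single (mdel L k c) 1 := by
  simp [mbdry]

theorem IsBlockShuffle.mdel_tauMul_comp {b : Fin (n + 1) → β} {k : Fin (n + 1)}
    {σ : Equiv.Perm (Fin (n + 1))} (hσ : IsBlockShuffle b σ) (hk : SameBlockAt b k σ)
    {a : Fin (n + 1) → L} (ha : ∀ x y, x ≤ y → b x = b y → a y ≤ a x) :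
    mdel L k (tauMul L (a ∘ σ)) = tauMul L (a ∘ σ ∘ k.succAbove) := by
  refine mdel_tauMul fun j hj => ha _ _ ((hσ.le_iff_le (hk j hj)).2 ?_) (hk j hj)
  exact hj ▸ Fin.castSucc_lt_succ.le

/-- Exchanging the entries at positions `k - 1` and `k` is a sign-reversing involution of the
summands. -/
theorem sum_not_sameBlockAt_eq_zero (b : Fin (n + 1) → β) (k : Fin (n + 1))
    (a : Fin (n + 1) → L) :
    ∑ σ with IsBlockShuffle b σ ∧ ¬ SameBlockAt b k σ,
      ((Equiv.Perm.sign σ : ℤ) : K) • Finsupp.single (mdel L k (tauMul L (a ∘ σ))) (1 : K) = 0 := by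
  rcases k.eq_zero_or_eq_succ with rfl | ⟨j, rfl⟩
  · simp [sameBlockAt_zero]
  have hne : j.castSucc ≠ j.succ := Fin.castSucc_lt_succ.ne
  refine Finset.sum_involution (fun σ _ => σ * Equiv.swap j.castSucc j.succ) ?_ ?_ ?_ ?_
  · intro σ _
    rw [Equiv.Perm.coe_mul, ← Function.comp_assoc, mdel_succ_tauMul_comp_swap]
    simp [Equiv.Perm.sign_swap hne]
  · intro σ _ _ h
    exact hne (Equiv.swap_eq_one_iff.1 (mul_eq_left.1 h))
  · intro σ hσ
    rw [Finset.mem_filter_univ, sameBlockAt_succ_iff] at hσ ⊢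
    exact ⟨hσ.1.mul_swap hσ.2, by simpa using Ne.symm hσ.2⟩
  · intro σ _
    simp [mul_assoc]

theorem sum_isBlockShuffle_eq_sum_sameBlockAt (b : Fin (n + 1) → β) (k : Fin (n + 1))
    (a : Fin (n + 1) → L) :
    ∑ σ with IsBlockShuffle b σ,
        ((Equiv.Perm.sign σ : ℤ) : K) • Finsupp.single (mdel L k (tauMul L (a ∘ σ))) (1 : K) =
      ∑ σ with IsBlockShuffle b σ ∧ SameBlockAt b k σ,
        ((Equiv.Perm.sign σ : ℤ) : K) • Finsupp.single (mdel L k (tauMul L (a ∘ σ))) (1 : K) := by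
  rw [← Finset.sum_filter_add_sum_filter_not _ (SameBlockAt b k), Finset.filter_filter,
    Finset.filter_filter, sum_not_sameBlockAt_eq_zero, add_zero]

theorem mbdry_shuffleSum (b : Fin (n + 1) → β) (a : Fin (n + 1) → L)
    (ha : ∀ x y, x ≤ y → b x = b y → a y ≤ a x) :
    mbdry K L n (shuffleSum K b a) =
      ∑ m : Fin (n + 1), (-1 : K) ^ (m : ℕ) • shuffleSum K (b ∘ m.succAbove) (a ∘ m.succAbove) := by
  calc mbdry K L n (shuffleSum K b a)
      = ∑ k : Fin (n + 1), (-1 : K) ^ (k : ℕ) • ∑ σ with IsBlockShuffle b σ,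
          ((Equiv.Perm.sign σ : ℤ) : K) • Finsupp.single (mdel L k (tauMul L (a ∘ σ))) 1 := by
        simp only [shuffleSum, map_sum, map_smul, mbdry_single, Finset.smul_sum]
        rw [Finset.sum_comm]
        exact Finset.sum_congr rfl fun k _ => Finset.sum_congr rfl fun σ _ => smul_comm ..
    _ = ∑ k : Fin (n + 1), ∑ σ with IsBlockShuffle b σ ∧ SameBlockAt b k σ,
          ((-1 : K) ^ (k : ℕ) * (Equiv.Perm.sign σ : ℤ)) •
            Finsupp.single (tauMul L (a ∘ σ ∘ k.succAbove)) 1 := by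
        simp only [sum_isBlockShuffle_eq_sum_sameBlockAt, Finset.smul_sum, smul_smul]
        refine Finset.sum_congr rfl fun k _ => Finset.sum_congr rfl fun σ hσ => ?_
        rw [Finset.mem_filter_univ] at hσ
        rw [hσ.1.mdel_tauMul_comp hσ.2 ha]
    _ = ∑ m : Fin (n + 1), ∑ s with IsBlockShuffle (b ∘ m.succAbove) s,
          ((-1 : K) ^ (m : ℕ) * (Equiv.Perm.sign s : ℤ)) •
            Finsupp.single (tauMul L (a ∘ m.succAbove ∘ s)) 1 := by
        rw [sum_sameBlockAt_eq_sum_insertPerm]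
        refine Finset.sum_congr rfl fun m _ => Finset.sum_congr rfl fun s _ => ?_
        rw [insertPerm_comp_succAbove, sign_insertPerm]
        congr 1
        push_cast
        rw [← mul_assoc, ← pow_add, Even.neg_one_pow ⟨_, rfl⟩, one_mul]
    _ = _ := by simp only [shuffleSum, Finset.smul_sum, smul_smul, Function.comp_assoc]

end ShuffleSum

section Concatenation

variable {X : Type} {n p q : ℕ}

/-- The labelling of `Fin n` by two blocks, the first of which is `{0, …, t - 1}`. -/
def firstBlock (t : ℕ) (x : Fin n) : Prop := (x : ℕ) < t

theorem isShuffleBlocks_iff {t : ℕ} {σ : Equiv.Perm (Fin n)} :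
    IsShuffleBlocks t σ ↔ IsBlockShuffle (firstBlock t) σ := by
  simp only [IsShuffleBlocks, IsBlockShuffle, firstBlock, eq_iff_iff]
  grind

theorem firstBlock_comp_succAbove_of_lt {t : ℕ} {m : Fin (n + 1)} (hm : (m : ℕ) < t + 1) :
    firstBlock (t + 1) ∘ m.succAbove = firstBlock t := by
  funext x
  simp only [Function.comp_apply, firstBlock, eq_iff_iff]
  grind [Fin.succAbove]

theorem firstBlock_comp_succAbove_of_le {t : ℕ} {m : Fin (n + 1)} (hm : t ≤ m) :
    firstBlock t ∘ m.succAbove = firstBlock t := by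
  funext x
  simp only [Function.comp_apply, firstBlock, eq_iff_iff]
  grind [Fin.succAbove]

theorem eq_concatT_iff (h : p + q = n) {f : Fin n → X} {u : Fin p → X} {v : Fin q → X} :
    f = concatT X h u v ↔ (∀ i, f (Fin.cast h (Fin.castAdd q i)) = u i) ∧
      ∀ j, f (Fin.cast h (Fin.natAdd p j)) = v j := by
  subst h
  simp [funext_iff, Fin.forall_fin_add, concatT]

theorem concatT_cast_castAdd (h : p + q = n) (u : Fin p → X) (v : Fin q → X) (i : Fin p) :
    concatT X h u v (Fin.cast h (Fin.castAdd q i)) = u i :=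
  ((eq_concatT_iff h).1 rfl).1 i

theorem concatT_cast_natAdd (h : p + q = n) (u : Fin p → X) (v : Fin q → X) (j : Fin q) :
    concatT X h u v (Fin.cast h (Fin.natAdd p j)) = v j :=
  ((eq_concatT_iff h).1 rfl).2 j

theorem concatT_le_concatT [Preorder X] (h : p + q = n) {u : Fin p → X} {v : Fin q → X}
    (hu : Antitone u) (hv : Antitone v) (x y : Fin n) (hxy : x ≤ y)
    (hb : firstBlock p x = firstBlock p y) : concatT X h u v y ≤ concatT X h u v x := by
  have hb' : (x : ℕ) < p ↔ (y : ℕ) < p := iff_of_eq hb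
  unfold concatT
  by_cases hx : (x : ℕ) < p
  · rw [dif_pos hx, dif_pos (hb'.1 hx)]
    exact hu hxy
  · rw [dif_neg hx, dif_neg (hb'.not.1 hx)]
    exact hv (Nat.sub_le_sub_right hxy p)

theorem succAbove_castAdd_castAdd (h : p + 1 + q = n + 1) (h' : p + q = n) (i : Fin (p + 1))
    (x : Fin p) : (Fin.cast h (Fin.castAdd q i)).succAbove (Fin.cast h' (Fin.castAdd q x)) =
      Fin.cast h (Fin.castAdd q (i.succAbove x)) := by
  grind [Fin.succAbove]

theorem succAbove_castAdd_natAdd (h : p + 1 + q = n + 1) (h' : p + q = n) (i : Fin (p + 1))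
    (y : Fin q) : (Fin.cast h (Fin.castAdd q i)).succAbove (Fin.cast h' (Fin.natAdd p y)) =
      Fin.cast h (Fin.natAdd (p + 1) y) := by
  grind [Fin.succAbove]

theorem succAbove_natAdd_castAdd (h : p + (q + 1) = n + 1) (h' : p + q = n) (j : Fin (q + 1))
    (x : Fin p) : (Fin.cast h (Fin.natAdd p j)).succAbove (Fin.cast h' (Fin.castAdd q x)) =
      Fin.cast h (Fin.castAdd (q + 1) x) := by
  grind [Fin.succAbove]

theorem succAbove_natAdd_natAdd (h : p + (q + 1) = n + 1) (h' : p + q = n) (j : Fin (q + 1))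
    (y : Fin q) : (Fin.cast h (Fin.natAdd p j)).succAbove (Fin.cast h' (Fin.natAdd p y)) =
      Fin.cast h (Fin.natAdd p (j.succAbove y)) := by
  grind [Fin.succAbove]

theorem concatT_comp_succAbove_castAdd (h : p + 1 + q = n + 1) (h' : p + q = n)
    (u : Fin (p + 1) → X) (v : Fin q → X) (i : Fin (p + 1)) :
    concatT X h u v ∘ (Fin.cast h (Fin.castAdd q i)).succAbove =
      concatT X h' (u ∘ i.succAbove) v := by
  simp [eq_concatT_iff, succAbove_castAdd_castAdd h, succAbove_castAdd_natAdd h,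
    concatT_cast_castAdd, concatT_cast_natAdd]

theorem concatT_comp_succAbove_natAdd (h : p + (q + 1) = n + 1) (h' : p + q = n)
    (u : Fin p → X) (v : Fin (q + 1) → X) (j : Fin (q + 1)) :
    concatT X h u v ∘ (Fin.cast h (Fin.natAdd p j)).succAbove =
      concatT X h' u (v ∘ j.succAbove) := by
  simp [eq_concatT_iff, succAbove_natAdd_castAdd h, succAbove_natAdd_natAdd h,
    concatT_cast_castAdd, concatT_cast_natAdd]

theorem sum_eq_sum_castAdd_add_sum_natAdd {M : Type*} [AddCommMonoid M] (h : p + q = n)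
    (f : Fin n → M) :
    ∑ m, f m = ∑ i, f (Fin.cast h (Fin.castAdd q i)) + ∑ j, f (Fin.cast h (Fin.natAdd p j)) := by
  subst h
  exact Fin.sum_univ_add f

end Concatenation

section TensorSquare

variable {L} {n p q : ℕ}

theorem castMGrp_shufPair (h : p + q = n) (c : MChain L p) (c' : MChain L q) :
    castMGrp K L h (shufPair K L c c') = shuffleSum K (firstBlock p) (concatT L h c.1 c'.1) := by
  subst h
  have hcast : castMGrp K L (rfl : p + q = p + q) = LinearEquiv.refl K _ := by
    ext x : 1
    simp [castMGrp]
  simp [hcast, shufPair, shuffleSum, Finset.sum_filter, isShuffleBlocks_iff]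

/-- The basis vector `c ⊗ c'` of the tensor square. -/
def tensorChain (h : p + q = n) (c : MChain L p) (c' : MChain L q) : Dmod K L n :=
  DirectSum.lof K (DIdx n) (fun pq => MGrp K L pq.1.1 ⊗[K] MGrp K L pq.1.2) ⟨(p, q), h⟩
    (Finsupp.single c 1 ⊗ₜ[K] Finsupp.single c' 1)

variable {K} in
theorem linearMap_ext_tensorChain {M : Type*} [AddCommMonoid M] [Module K M]
    {f g : Dmod K L n →ₗ[K] M}
    (hfg : ∀ (p q : ℕ) (h : p + q = n) (c : MChain L p) (c' : MChain L q),
      f (tensorChain K h c c') = g (tensorChain K h c c')) : f = g := by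
  refine DirectSum.linearMap_ext K fun ⟨⟨p, q⟩, h⟩ => ?_
  exact TensorProduct.ext (Finsupp.lhom_ext' fun c => LinearMap.ext_ring
    (Finsupp.lhom_ext' fun c' => LinearMap.ext_ring (hfg p q h c c')))

theorem shuffleTotal_tensorChain (h : p + q = n) (c : MChain L p) (c' : MChain L q) :
    shuffleTotal K L n (tensorChain K h c c') =
      shuffleSum K (firstBlock p) (concatT L h c.1 c'.1) := by
  rw [tensorChain, shuffleTotal, DirectSum.toModule_lof]
  simp [shufLin, castMGrp_shufPair]

theorem deltaD_tensorChain (h : p + q = n + 1) (c : MChain L p) (c' : MChain L q) :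
    deltaD K L n (tensorChain K h c c') =
      deltaLeft K L n ⟨(p, q), h⟩ (Finsupp.single c 1 ⊗ₜ[K] Finsupp.single c' 1) +
        deltaRight K L n ⟨(p, q), h⟩ (Finsupp.single c 1 ⊗ₜ[K] Finsupp.single c' 1) := by
  rw [tensorChain, deltaD, DirectSum.toModule_lof, LinearMap.add_apply]

theorem deltaLeft_single_tmul_single (h : p + 1 + q = n + 1) (h' : p + q = n)
    (c : MChain L (p + 1)) (c' : MChain L q) :
    deltaLeft K L n ⟨(p + 1, q), h⟩ (Finsupp.single c 1 ⊗ₜ[K] Finsupp.single c' 1) =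
      ∑ i : Fin (p + 1), (-1 : K) ^ (i : ℕ) • tensorChain K h' (mdel L i c) c' := by
  simp only [deltaLeft, tensorChain, LinearMap.comp_apply, TensorProduct.map_tmul, mbdry_single,
    LinearMap.id_apply, TensorProduct.sum_tmul, ← TensorProduct.smul_tmul', map_sum, map_smul]

theorem deltaRight_single_tmul_single (h : p + (q + 1) = n + 1) (h' : p + q = n)
    (c : MChain L p) (c' : MChain L (q + 1)) :
    deltaRight K L n ⟨(p, q + 1), h⟩ (Finsupp.single c 1 ⊗ₜ[K] Finsupp.single c' 1) =
      ∑ j : Fin (q + 1), (-1 : K) ^ (p + j : ℕ) • tensorChain K h' c (mdel L j c') := by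
  simp only [deltaRight, tensorChain, LinearMap.smul_apply, LinearMap.comp_apply,
    TensorProduct.map_tmul, mbdry_single, LinearMap.id_apply, TensorProduct.tmul_sum,
    TensorProduct.tmul_smul, map_sum, map_smul, Finset.smul_sum, pow_add, mul_smul]

theorem shuffleTotal_deltaLeft (h : p + q = n + 1) (c : MChain L p) (c' : MChain L q) :
    shuffleTotal K L n
        (deltaLeft K L n ⟨(p, q), h⟩ (Finsupp.single c 1 ⊗ₜ[K] Finsupp.single c' 1)) =
      ∑ i : Fin p, (-1 : K) ^ (i : ℕ) •
        shuffleSum K (firstBlock p ∘ (Fin.cast h (Fin.castAdd q i)).succAbove)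
          (concatT L h c.1 c'.1 ∘ (Fin.cast h (Fin.castAdd q i)).succAbove) := by
  cases p with
  | zero => simp [deltaLeft]
  | succ p =>
    have h' : p + q = n := by omega
    rw [deltaLeft_single_tmul_single K h h', map_sum]
    refine Finset.sum_congr rfl fun i _ => ?_
    rw [map_smul, shuffleTotal_tensorChain, concatT_comp_succAbove_castAdd h h', mdel,
      firstBlock_comp_succAbove_of_lt
        (m := Fin.cast h (Fin.castAdd q i)) i.isLt]

theorem shuffleTotal_deltaRight (h : p + q = n + 1) (c : MChain L p) (c' : MChain L q) :
    shuffleTotal K L n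
        (deltaRight K L n ⟨(p, q), h⟩ (Finsupp.single c 1 ⊗ₜ[K] Finsupp.single c' 1)) =
      ∑ j : Fin q, (-1 : K) ^ (p + j : ℕ) •
        shuffleSum K (firstBlock p ∘ (Fin.cast h (Fin.natAdd p j)).succAbove)
          (concatT L h c.1 c'.1 ∘ (Fin.cast h (Fin.natAdd p j)).succAbove) := by
  cases q with
  | zero => simp [deltaRight]
  | succ q =>
    have h' : p + q = n := by omega
    rw [deltaRight_single_tmul_single K h h', map_sum]
    refine Finset.sum_congr rfl fun j _ => ?_
    rw [map_smul, shuffleTotal_tensorChain, firstBlock_comp_succAbove_of_le (by simp),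
      concatT_comp_succAbove_natAdd h h', mdel]

end TensorSquare

theorem shuffle_chain_map_general (n : ℕ) (α : Dmod K L (n + 1)) :
    mbdry K L n (shuffleTotal K L (n + 1) α) = shuffleTotal K L n (deltaD K L n α) := by
  suffices hcomp : mbdry K L n ∘ₗ shuffleTotal K L (n + 1) = shuffleTotal K L n ∘ₗ deltaD K L n from
    LinearMap.congr_fun hcomp α
  refine linearMap_ext_tensorChain fun p q h c c' => ?_
  rw [LinearMap.comp_apply, LinearMap.comp_apply, shuffleTotal_tensorChain,
    mbdry_shuffleSum K _ _ (concatT_le_concatT h c.2 c'.2), deltaD_tensorChain, map_add,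
    shuffleTotal_deltaLeft, shuffleTotal_deltaRight, sum_eq_sum_castAdd_add_sum_natAdd h]
  rfl

/-- **the shuffle product is a chain map.**  For every `n ≥ 0` and every
`α ∈ D_n(L)` (i.e. `α ∈ Dmod K L (n+1)` in entry-count grading),
`∂_n(⧢(α)) = ⧢(δ_n(α))`. -/
theorem shuffle_chain_map [Fintype L] (n : ℕ) (α : Dmod K L (n + 1)) :
    mbdry K L n (shuffleTotal K L (n + 1) α) = shuffleTotal K L n (deltaD K L n α) :=
  shuffle_chain_map_general K L n α

end
end

section
/- For every finite poset P there exists a synor complex for P, i.e. a strictly P-graded complex (S_*(P), δ_*) together with an injective P-graded chain map φ : (S_*(P), δ_*) → (C̃_*(P), ∂_*) satisfying (S1) and (S2). -/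
open Finsupp

noncomputable section

variable (K : Type) [Field K]

section Core
variable (P : Type) [Preorder P]

/-- Order chains with `n` elements of the poset `P`, written as strictly
decreasing tuples `(x₀ > x₁ > ⋯ > x_{n-1})`. -/
def OChain (n : ℕ) : Type := {c : Fin n → P // StrictAnti c}

/-- The chain group in "level" `n`: the `K`-vector space with basis the order chains with
`n` elements.  Level `n` corresponds to homological degree `n - 1`; in particular
`CGrp K P 0 ≅ K` is the reduced part `C̃₋₁`. -/
abbrev CGrp (n : ℕ) : Type := OChain P n →₀ K

/-- Deletion of the `k`-th entry of an order chain. -/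
def odel {n : ℕ} (k : Fin (n + 1)) (c : OChain P (n + 1)) : OChain P n :=
  ⟨c.1 ∘ k.succAbove, c.2.comp_strictMono (Fin.strictMono_succAbove k)⟩

/-- The simplicial boundary map (of the reduced simplicial chain complex of the order
complex), from level `n+1` to level `n`. -/
def cbdry (n : ℕ) : CGrp K P (n + 1) →ₗ[K] CGrp K P n :=
  Finsupp.lsum K fun c => ∑ k : Fin (n + 1), ((-1 : K) ^ (k : ℕ)) • Finsupp.lsingle (odel P k c)

/-- The cycles in level `n` (every level-0 chain, i.e. multiple of the empty chain,
is a cycle). -/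
def cyclesAt : (n : ℕ) → Submodule K (CGrp K P n)
  | 0 => ⊤
  | (n + 1) => LinearMap.ker (cbdry K P n)

/-- The boundaries in level `n`. -/
def boundariesIn (n : ℕ) : Submodule K (CGrp K P n) :=
  LinearMap.range (cbdry K P n)

/-- `H̃_{n-1}(P) ≠ 0`: nontriviality of the reduced simplicial homology (with coefficients
in `K`) of the order complex of `P` in degree `n - 1` (level `n`). -/
def RHomNontrivial (n : ℕ) : Prop := ¬ cyclesAt K P n ≤ boundariesIn K P n

/-- The subspace of chains all of whose elements lie in the subset `J ⊆ P`
(the chain group of the subposet `J`). -/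
def chainsIn (J : Set P) (n : ℕ) : Submodule K (CGrp K P n) :=
  Finsupp.supported K K {c : OChain P n | ∀ r, c.1 r ∈ J}

/-- Transport of chain groups along an equality of levels. -/
def castCGrp {a b : ℕ} (h : a = b) : CGrp K P a ≃ₗ[K] CGrp K P b :=
  Finsupp.domLCongr (Equiv.cast (congrArg (OChain P) h))

end Core


section Synor
variable (P : Type) [PartialOrder P]

/-- For a family `S` of graded pieces (with `S n x` the piece of homological degree `n`,
i.e. level `n+1`, sitting over `x ∈ P`) and a subset `J ⊆ P`, the part of the complex
lying over `J`: at level `0` it is all of `C̃₋₁ = K`, and at level `n+1` it is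
`⊕_{x ∈ J} S_n^{(x)}`. -/
def idealPart (S : (n : ℕ) → P → Submodule K (CGrp K P (n + 1))) (J : Set P) :
    (nn : ℕ) → Submodule K (CGrp K P nn)
  | 0 => ⊤
  | (n + 1) => ⨆ x ∈ J, S n x

/-- A synor complex for the finite poset `P`: a strictly `P`-graded subcomplex
`S_*(P) ⊆ C̃_*(P)` of the reduced simplicial chain complex of the order complex of `P`
(we identify the injective `P`-graded chain map `φ` with the inclusion of its image) with:
`S_i(P) = ⊕_{x ∈ P} S_i(P)^{(x)}` with `S_i(P)^{(x)}` contained in the span of the order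
chains with largest element `x` (`graded`); `∂(S_i(P)^{(x)}) ⊆ ⊕_{y<x} S_{i-1}(P)^{(y)}`
(`strict`; for degree `0` the boundary lands in `C̃₋₁ = K` automatically); (S1)
`dim_K S_i(P)^{(x)} = dim_K H̃_{i-1}(P_{<x})` (`dim_eq`, the dimension of the reduced
homology being the dimension of the cycles minus the dimension of the boundaries); and
(S2) for every order ideal `J ⊆ P` the inclusion `S_*(P)^J ⊆ C̃_*(J)` induces an
isomorphism on homology (`quasiIso`: surjectivity and injectivity of the induced map). -/
structure SynorComplex : Type where
  S : (n : ℕ) → P → Submodule K (CGrp K P (n + 1))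
  graded : ∀ (n : ℕ) (x : P),
    S n x ≤ Finsupp.supported K K {c : OChain P (n + 1) | c.1 0 = x}
  strict : ∀ (n : ℕ) (x : P), ∀ f ∈ S (n + 1) x,
    cbdry K P (n + 1) f ∈ ⨆ y ∈ Set.Iio x, S n y
  dim_eq : ∀ (n : ℕ) (x : P),
    Module.finrank K ↥(S n x) =
      Module.finrank K ↥(cyclesAt K {y : P // y < x} n) -
        Module.finrank K ↥(boundariesIn K {y : P // y < x} n)
  quasiIso : ∀ J : Set P, IsLowerSet J → ∀ nn : ℕ,
    (∀ z ∈ cyclesAt K P nn ⊓ chainsIn K P J nn,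
        ∃ a ∈ cyclesAt K P nn ⊓ idealPart K P S J nn,
          z - a ∈ Submodule.map (cbdry K P nn) (chainsIn K P J (nn + 1))) ∧
    (∀ a ∈ idealPart K P S J nn,
        a ∈ Submodule.map (cbdry K P nn) (chainsIn K P J (nn + 1)) →
        a ∈ Submodule.map (cbdry K P nn) (idealPart K P S J (nn + 1)))

end Synor

/-!
The piece of the synor complex over `x` is built level by level: it consists of the cones with
apex `x` over a space `T` of cycles of `P_{<x}` which lie in the part already constructed and
represent the homology of `P_{<x}`. The boundary of a cone over a cycle is its base, so this is a
strictly graded subcomplex.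

To see that `S^J ⊆ C̃(J)` is a quasi-isomorphism it suffices that the relative complex
`C̃(J) / S^J` is acyclic. Adjoining to `J` a new maximal element `x` adds to this quotient the cones
over `C̃(P_{<x}) / T`, and a relative cycle there is a cone over a cycle of `P_{<x}`, which is an
element of `T` up to a boundary. Hence acyclicity propagates along lower sets, over which one
inducts by well-foundedness and Zorn's lemma.
-/

section RelativeComplement
variable {α : Type*} [Lattice α] [BoundedOrder α] [IsModularLattice α] [ComplementedLattice α]

/-- A complement of `a ⊓ b` relative to `a`; for a space `a` of cycles and the space `b` of
boundaries, it is a space of representatives of the homology classes meeting `a`. -/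
def relCompl (a b : α) : α :=
  (IsModularLattice.exists_disjoint_and_sup_eq (inf_le_left : a ⊓ b ≤ a)).choose

theorem inf_sup_relCompl (a b : α) : a ⊓ b ⊔ relCompl a b = a :=
  (IsModularLattice.exists_disjoint_and_sup_eq (inf_le_left : a ⊓ b ≤ a)).choose_spec.2

theorem relCompl_le (a b : α) : relCompl a b ≤ a :=
  le_sup_right.trans_eq (inf_sup_relCompl a b)

theorem relCompl_sup (a b : α) : relCompl a b ⊔ b = a ⊔ b :=
  calc relCompl a b ⊔ b
      = relCompl a b ⊔ (a ⊓ b ⊔ b) := by rw [sup_eq_right.mpr (inf_le_right : a ⊓ b ≤ b)]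
    _ = a ⊔ b := by rw [← sup_assoc, sup_comm (relCompl a b), inf_sup_relCompl]

theorem disjoint_relCompl (a b : α) : Disjoint (relCompl a b) b := by
  have hdisj : Disjoint (a ⊓ b) (relCompl a b) :=
    (IsModularLattice.exists_disjoint_and_sup_eq (inf_le_left : a ⊓ b ≤ a)).choose_spec.1
  exact disjoint_iff_inf_le.mpr <| hdisj.le_bot.trans' <|
    le_inf (inf_le_inf_right b (relCompl_le a b)) inf_le_left

end RelativeComplement

theorem exists_mem_biSup_of_mem_biSup_sUnion {R M ι : Type*} [Semiring R] [AddCommMonoid M]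
    [Module R M] (F : ι → Submodule R M) {c : Set (Set ι)} (hne : c.Nonempty)
    (hc : DirectedOn (· ⊆ ·) c) {v : M} (hv : v ∈ ⨆ x ∈ ⋃₀ c, F x) :
    ∃ I ∈ c, v ∈ ⨆ x ∈ I, F x := by
  have := hne.to_subtype
  rw [iSup_sUnion, iSup_subtype', Submodule.mem_iSup_of_directed] at hv
  · simpa using hv
  · intro I J
    obtain ⟨L, hL, hIL, hJL⟩ := hc I.1 I.2 J.1 J.2
    exact ⟨⟨L, hL⟩, biSup_mono hIL, biSup_mono hJL⟩

theorem isLowerSet_insert {α : Type*} [PartialOrder α] {s : Set α} {a : α} (hs : IsLowerSet s)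
    (ha : Set.Iio a ⊆ s) : IsLowerSet (insert a s) := by
  rw [← Set.union_eq_self_of_subset_left ha, ← Set.insert_union, Set.Iio_insert]
  exact (isLowerSet_Iic a).union hs

section OrderChains
variable {P Q : Type} [Preorder P] [Preorder Q]

/-- The image of an order chain under a strictly monotone map. -/
def OChain.map {f : P → Q} (hf : StrictMono f) {n : ℕ} (c : OChain P n) : OChain Q n :=
  ⟨f ∘ c.1, hf.comp_strictAnti c.2⟩

/-- The order chain of `P` obtained from an order chain of `P_{<x}` by adding `x` on top. -/
def OChain.cone (x : P) {n : ℕ} (c : OChain {y : P // y < x} n) : OChain P (n + 1) :=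
  ⟨Fin.cons x fun i => (c.1 i : P), by
    intro i j hij
    obtain ⟨j, rfl⟩ := Fin.exists_succ_eq.mpr (Fin.ne_zero_of_lt hij)
    cases i using Fin.cases with
    | zero => exact (c.1 j).2
    | succ i => exact c.2 (Fin.succ_lt_succ_iff.mp hij)⟩

theorem OChain.range_map_subtypeVal (x : P) (n : ℕ) :
    Set.range (OChain.map (Subtype.strictMono_coe (· < x)) (n := n)) =
      {c | ∀ r, c.1 r ∈ Set.Iio x} := by
  ext c
  exact ⟨by rintro ⟨q, rfl⟩ r; exact (q.1 r).2,
    fun hc => ⟨⟨fun r => ⟨c.1 r, hc r⟩, fun _ _ h => c.2 h⟩, rfl⟩⟩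

theorem OChain.range_cone (x : P) (n : ℕ) :
    Set.range (OChain.cone x (n := n)) = {c | c.1 0 = x} := by
  ext c
  refine ⟨by rintro ⟨q, rfl⟩; rfl, ?_⟩
  rintro rfl
  exact ⟨⟨fun i => ⟨c.1 i.succ, c.2 i.succ_pos⟩, fun _ _ h => c.2 (Fin.succ_lt_succ_iff.mpr h)⟩,
    Subtype.ext (Fin.cons_self_tail c.1)⟩

theorem OChain.cone_injective (x : P) (n : ℕ) :
    Function.Injective (OChain.cone x (n := n)) := fun c d h => by
  refine Subtype.ext (funext fun i => Subtype.ext ?_)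
  simpa [OChain.cone] using congrFun (congrArg Subtype.val h) i.succ

theorem odel_zero_cone (x : P) {n : ℕ} (c : OChain {y : P // y < x} n) :
    odel P 0 (c.cone x) = c.map (Subtype.strictMono_coe (· < x)) :=
  rfl

theorem odel_succ_cone (x : P) {n : ℕ} (k : Fin (n + 1)) (c : OChain {y : P // y < x} (n + 1)) :
    odel P k.succ (c.cone x) = (odel _ k c).cone x := by
  refine Subtype.ext (funext fun i => ?_)
  induction i using Fin.cases <;> simp [odel, OChain.cone, Fin.removeNth]

instance OChain.instFinite [Finite P] (n : ℕ) : Finite (OChain P n) :=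
  inferInstanceAs (Finite {c : Fin n → P // StrictAnti c})

end OrderChains

section ChainGroups
variable {P Q : Type} [Preorder P] [Preorder Q]

/-- The map of chain groups induced by a strictly monotone map of posets. -/
def mapCGrp {f : P → Q} (hf : StrictMono f) (n : ℕ) : CGrp K P n →ₗ[K] CGrp K Q n :=
  Finsupp.lmapDomain K K (OChain.map hf)

/-- The inclusion of the chain groups of `P_{<x}` into those of `P`. -/
abbrev inclMap (x : P) (n : ℕ) : CGrp K {y : P // y < x} n →ₗ[K] CGrp K P n :=
  mapCGrp K (Subtype.strictMono_coe (· < x)) n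

/-- The cone operator with apex `x`, which adds `x` on top of the chains of `P_{<x}`. -/
def coneMap (x : P) (n : ℕ) : CGrp K {y : P // y < x} n →ₗ[K] CGrp K P (n + 1) :=
  Finsupp.lmapDomain K K (OChain.cone x)

theorem coneMap_injective (x : P) (n : ℕ) : Function.Injective (coneMap K x n) :=
  Finsupp.mapDomain_injective (OChain.cone_injective x n)

theorem range_inclMap (x : P) (n : ℕ) :
    LinearMap.range (inclMap K x n) = chainsIn K P (Set.Iio x) n := by
  rw [LinearMap.range_eq_map, ← Finsupp.supported_univ, inclMap, mapCGrp,
    Finsupp.lmapDomain_supported, Set.image_univ, OChain.range_map_subtypeVal, chainsIn]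

theorem range_coneMap (x : P) (n : ℕ) :
    LinearMap.range (coneMap K x n) =
      Finsupp.supported K K {c : OChain P (n + 1) | c.1 0 = x} := by
  rw [LinearMap.range_eq_map, ← Finsupp.supported_univ, coneMap, Finsupp.lmapDomain_supported,
    Set.image_univ, OChain.range_cone]

theorem chainsIn_mono {J J' : Set P} (h : J ⊆ J') (n : ℕ) :
    chainsIn K P J n ≤ chainsIn K P J' n :=
  Finsupp.supported_mono fun _ hc r => h (hc r)

theorem chainsIn_univ (n : ℕ) : chainsIn K P Set.univ n = ⊤ := by
  simp [chainsIn]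

theorem inclMap_mem_chainsIn {x : P} {J : Set P} (h : Set.Iio x ⊆ J) {n : ℕ}
    (f : CGrp K {y : P // y < x} n) : inclMap K x n f ∈ chainsIn K P J n := by
  apply chainsIn_mono K h
  rw [← range_inclMap]
  exact LinearMap.mem_range_self _ f

theorem disjoint_range_coneMap_chainsIn {J : Set P} {x : P} (hx : x ∉ J) (n : ℕ) :
    Disjoint (LinearMap.range (coneMap K x n)) (chainsIn K P J (n + 1)) := by
  rw [range_coneMap]
  exact Finsupp.disjoint_supported_supported <| Set.disjoint_left.mpr fun c hcx hcJ =>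
    hx (hcx ▸ hcJ 0)

theorem chainsIn_succ_eq_biSup {J : Set P} (hJ : IsLowerSet J) (n : ℕ) :
    chainsIn K P J (n + 1) = ⨆ x ∈ J, LinearMap.range (coneMap K x n) := by
  simp only [range_coneMap, chainsIn]
  rw [iSup_subtype', ← Finsupp.supported_iUnion]
  congr 1
  ext c
  simp only [Set.mem_ofPred_eq, Set.mem_iUnion, Subtype.exists, exists_prop, exists_eq_right']
  exact ⟨fun h => h 0, fun h r => hJ (c.2.antitone (Fin.zero_le r)) h⟩

theorem hom_ext_coneMap {n : ℕ} {V : Type*} [AddCommGroup V] [Module K V]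
    {φ ψ : CGrp K P (n + 1) →ₗ[K] V}
    (h : ∀ (x : P) (c : CGrp K {y : P // y < x} n), φ (coneMap K x n c) = ψ (coneMap K x n c)) :
    φ = ψ := by
  rw [← LinearMap.eqLocus_eq_top, eq_top_iff, ← chainsIn_univ,
    chainsIn_succ_eq_biSup K isLowerSet_univ]
  refine iSup₂_le fun x _ => ?_
  rintro _ ⟨c, rfl⟩
  exact h x c

theorem cbdry_single {n : ℕ} (c : OChain P (n + 1)) (a : K) :
    cbdry K P n (single c a) =
      ∑ k : Fin (n + 1), ((-1 : K) ^ (k : ℕ)) • single (odel P k c) a := by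
  simp [cbdry]

theorem cbdry_mem_chainsIn {J : Set P} {n : ℕ} {f : CGrp K P (n + 1)}
    (hf : f ∈ chainsIn K P J (n + 1)) : cbdry K P n f ∈ chainsIn K P J n := by
  suffices h : chainsIn K P J (n + 1) ≤ (chainsIn K P J n).comap (cbdry K P n) from h hf
  rw [chainsIn, Finsupp.supported_eq_span_single, Submodule.span_le]
  rintro _ ⟨c, hc, rfl⟩
  simp only [SetLike.mem_coe, Submodule.mem_comap, cbdry_single]
  exact Submodule.sum_mem _ fun k _ => Submodule.smul_mem _ _ <|
    Finsupp.single_mem_supported K _ fun r => hc _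

theorem cbdry_mapCGrp {f : P → Q} (hf : StrictMono f) {n : ℕ} (c : CGrp K P (n + 1)) :
    cbdry K Q n (mapCGrp K hf (n + 1) c) = mapCGrp K hf n (cbdry K P n c) := by
  induction c using Finsupp.induction_linear with
  | zero => simp only [map_zero]
  | add c d hc hd => simp only [map_add, hc, hd]
  | single c a =>
    simp only [mapCGrp, cbdry_single, map_sum, map_smul, lmapDomain_apply, mapDomain_single]
    rfl

theorem cbdry_coneMap_zero (x : P) (f : CGrp K {y : P // y < x} 0) :
    cbdry K P 0 (coneMap K x 0 f) = inclMap K x 0 f := by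
  induction f using Finsupp.induction_linear with
  | zero => simp only [map_zero]
  | add f g hf hg => simp only [map_add, hf, hg]
  | single c a => simp [mapCGrp, coneMap, cbdry_single, odel_zero_cone]

theorem cbdry_coneMap_succ (x : P) {n : ℕ} (f : CGrp K {y : P // y < x} (n + 1)) :
    cbdry K P (n + 1) (coneMap K x (n + 1) f) =
      inclMap K x (n + 1) f - coneMap K x n (cbdry K _ n f) := by
  induction f using Finsupp.induction_linear with
  | zero => simp only [map_zero, sub_zero]
  | add f g hf hg => simp only [map_add, hf, hg]; abel
  | single c a =>
    simp only [mapCGrp, coneMap, cbdry_single, lmapDomain_apply, mapDomain_single, map_sum,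
      map_smul]
    rw [Fin.sum_univ_succ]
    simp [odel_zero_cone, odel_succ_cone, pow_succ, sub_eq_add_neg]

theorem cbdry_coneMap_of_mem_cyclesAt (x : P) {n : ℕ} {c : CGrp K {y : P // y < x} n}
    (hc : c ∈ cyclesAt K _ n) : cbdry K P n (coneMap K x n c) = inclMap K x n c := by
  cases n with
  | zero => exact cbdry_coneMap_zero K x c
  | succ n => rw [cbdry_coneMap_succ, LinearMap.mem_ker.mp hc, map_zero, sub_zero]

theorem cbdry_mem_cyclesAt {n : ℕ} (f : CGrp K P (n + 1)) : cbdry K P n f ∈ cyclesAt K P n := by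
  induction n generalizing P with
  | zero => exact Submodule.mem_top
  | succ n ih =>
    suffices h : cbdry K P n ∘ₗ cbdry K P (n + 1) = 0 from DFunLike.congr_fun h f
    refine hom_ext_coneMap K fun x c => ?_
    calc cbdry K P n (cbdry K P (n + 1) (coneMap K x (n + 1) c))
        = inclMap K x n (cbdry K _ n c) - cbdry K P n (coneMap K x n (cbdry K _ n c)) := by
          rw [cbdry_coneMap_succ, map_sub, cbdry_mapCGrp]
      _ = 0 := by rw [cbdry_coneMap_of_mem_cyclesAt K x (ih c), sub_self]

theorem cbdry_cbdry {n : ℕ} (f : CGrp K P (n + 2)) : cbdry K P n (cbdry K P (n + 1) f) = 0 :=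
  cbdry_mem_cyclesAt K f

end ChainGroups

section RelativeAcyclicity
variable {P : Type} [PartialOrder P] (S : (n : ℕ) → P → Submodule K (CGrp K P (n + 1)))

/-- Acyclicity of the relative complex `C̃(J) / S^J`: every chain of `J` whose boundary lies in
`S^J` is, up to a boundary, itself in `S^J`. Level `0` is omitted, as the relative complex vanishes
there. -/
def IsRelAcyclic (J : Set P) : Prop :=
  ∀ n, ∀ f ∈ chainsIn K P J (n + 1), cbdry K P n f ∈ idealPart K P S J n →
    f ∈ idealPart K P S J (n + 1) ⊔ (chainsIn K P J (n + 2)).map (cbdry K P (n + 1))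

theorem idealPart_mono {J J' : Set P} (h : J ⊆ J') (n : ℕ) :
    idealPart K P S J n ≤ idealPart K P S J' n := by
  cases n with
  | zero => exact le_rfl
  | succ n => exact biSup_mono h

theorem idealPart_insert (x : P) (J : Set P) (n : ℕ) :
    idealPart K P S (insert x J) (n + 1) = S n x ⊔ idealPart K P S J (n + 1) :=
  iSup_insert

theorem isRelAcyclic_empty : IsRelAcyclic K S ∅ := by
  intro n f hf _
  rw [chainsIn_succ_eq_biSup K isLowerSet_empty] at hf
  simp only [Set.mem_empty_iff_false, iSup_false, iSup_bot, Submodule.mem_bot] at hf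
  exact hf ▸ zero_mem _

variable {K S}

theorem IsRelAcyclic.sUnion {c : Set (Set P)} (hne : c.Nonempty) (hc : DirectedOn (· ⊆ ·) c)
    (hlow : ∀ J ∈ c, IsLowerSet J) (hacyc : ∀ J ∈ c, IsRelAcyclic K S J) :
    IsRelAcyclic K S (⋃₀ c) := by
  intro n f hf hbd
  have hchain : ∃ I ∈ c, f ∈ chainsIn K P I (n + 1) := by
    rw [chainsIn_succ_eq_biSup K (isLowerSet_sUnion hlow)] at hf
    obtain ⟨I, hI, hfI⟩ := exists_mem_biSup_of_mem_biSup_sUnion _ hne hc hf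
    exact ⟨I, hI, (chainsIn_succ_eq_biSup K (hlow I hI) n).symm ▸ hfI⟩
  have hideal : ∃ I ∈ c, cbdry K P n f ∈ idealPart K P S I n := by
    cases n with
    | zero => exact hne.imp fun I hI => ⟨hI, Submodule.mem_top⟩
    | succ n => exact exists_mem_biSup_of_mem_biSup_sUnion _ hne hc hbd
  obtain ⟨I, hI, hfI⟩ := hchain
  obtain ⟨I', hI', hbdI'⟩ := hideal
  obtain ⟨J, hJ, hIJ, hI'J⟩ := hc I hI I' hI'
  have hJc : J ⊆ ⋃₀ c := Set.subset_sUnion_of_mem hJ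
  exact sup_le_sup (idealPart_mono K S hJc _) (Submodule.map_mono (chainsIn_mono K hJc _))
    (hacyc J hJ n f (chainsIn_mono K hIJ _ hfI) (idealPart_mono K S hI'J n hbdI'))

theorem IsRelAcyclic.exists_cycle_sub_mem {J : Set P} (h : IsRelAcyclic K S J) {n : ℕ}
    {z : CGrp K P n} (hz : z ∈ cyclesAt K P n ⊓ chainsIn K P J n) :
    ∃ a ∈ cyclesAt K P n ⊓ idealPart K P S J n,
      z - a ∈ (chainsIn K P J (n + 1)).map (cbdry K P n) := by
  cases n with
  | zero => exact ⟨z, ⟨hz.1, Submodule.mem_top⟩, by simp only [sub_self, zero_mem]⟩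
  | succ n =>
    have hz0 : cbdry K P n z = 0 := hz.1
    obtain ⟨a, ha, _, ⟨e, he, rfl⟩, rfl⟩ :=
      Submodule.mem_sup.mp (h n z hz.2 (hz0 ▸ zero_mem _))
    refine ⟨a, ⟨?_, ha⟩, e, he, (add_sub_cancel_left _ _).symm⟩
    rwa [map_add, cbdry_cbdry, add_zero] at hz0

theorem IsRelAcyclic.mem_map_cbdry_idealPart {J : Set P} (h : IsRelAcyclic K S J) {n : ℕ}
    {a : CGrp K P n} (ha : a ∈ idealPart K P S J n)
    (hbd : a ∈ (chainsIn K P J (n + 1)).map (cbdry K P n)) :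
    a ∈ (idealPart K P S J (n + 1)).map (cbdry K P n) := by
  obtain ⟨f, hf, rfl⟩ := hbd
  obtain ⟨b, hb, _, ⟨e, -, rfl⟩, rfl⟩ := Submodule.mem_sup.mp (h n f hf ha)
  exact ⟨b, hb, by rw [map_add, cbdry_cbdry, add_zero]⟩

end RelativeAcyclicity

section Construction
variable {P : Type} [PartialOrder P]

/-- The chosen space of cycles of `P_{<x}` representing its homology; the cycles are taken in the
part of the synor complex one level below, here spelled out as cones over chosen cycles. -/
def synorCycles : (n : ℕ) → (x : P) → Submodule K (CGrp K {y : P // y < x} n)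
  | 0, x => relCompl (cyclesAt K {y : P // y < x} 0) (boundariesIn K {y : P // y < x} 0)
  | n + 1, x => relCompl
      (cyclesAt K {y : P // y < x} (n + 1) ⊓
        (⨆ y ∈ Set.Iio x, (synorCycles n y).map (coneMap K y n)).comap (inclMap K x (n + 1)))
      (boundariesIn K {y : P // y < x} (n + 1))

/-- The graded piece of the synor complex over `x`: the cones with apex `x` over the chosen
cycles of `P_{<x}`. -/
def synorPiece (n : ℕ) (x : P) : Submodule K (CGrp K P (n + 1)) :=
  (synorCycles K n x).map (coneMap K x n)

theorem synorCycles_eq_relCompl (n : ℕ) (x : P) :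
    synorCycles K n x = relCompl
      (cyclesAt K {y : P // y < x} n ⊓
        (idealPart K P (synorPiece K) (Set.Iio x) n).comap (inclMap K x n))
      (boundariesIn K {y : P // y < x} n) := by
  cases n with
  | zero => rw [idealPart, Submodule.comap_top, inf_top_eq, synorCycles]
  | succ n => rfl

theorem synorCycles_le (n : ℕ) (x : P) :
    synorCycles K n x ≤ cyclesAt K {y : P // y < x} n ⊓
      (idealPart K P (synorPiece K) (Set.Iio x) n).comap (inclMap K x n) :=
  (synorCycles_eq_relCompl K n x).trans_le (relCompl_le _ _)

theorem disjoint_synorCycles_boundariesIn (n : ℕ) (x : P) :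
    Disjoint (synorCycles K n x) (boundariesIn K {y : P // y < x} n) :=
  synorCycles_eq_relCompl K n x ▸ disjoint_relCompl _ _

variable {K}

theorem cbdry_coneMap_of_mem_synorCycles {n : ℕ} {x : P} {t : CGrp K {y : P // y < x} n}
    (ht : t ∈ synorCycles K n x) : cbdry K P n (coneMap K x n t) = inclMap K x n t :=
  cbdry_coneMap_of_mem_cyclesAt K x (synorCycles_le K n x ht).1

theorem inclMap_mem_idealPart {n : ℕ} {x : P} {t : CGrp K {y : P // y < x} n}
    (ht : t ∈ synorCycles K n x) :
    inclMap K x n t ∈ idealPart K P (synorPiece K) (Set.Iio x) n :=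
  (synorCycles_le K n x ht).2

variable (K) in
theorem idealPart_synorPiece_le_chainsIn {J : Set P} (hJ : IsLowerSet J) (n : ℕ) :
    idealPart K P (synorPiece K) J (n + 1) ≤ chainsIn K P J (n + 1) := by
  rw [chainsIn_succ_eq_biSup K hJ]
  exact iSup₂_mono fun x _ => LinearMap.map_le_range

theorem IsRelAcyclic.synorCycles_sup_boundariesIn {x : P}
    (h : IsRelAcyclic K (synorPiece K) (Set.Iio x)) (n : ℕ) :
    synorCycles K n x ⊔ boundariesIn K {y : P // y < x} n = cyclesAt K {y : P // y < x} n := by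
  have hbd : boundariesIn K {y : P // y < x} n ≤ cyclesAt K {y : P // y < x} n :=
    LinearMap.range_le_iff_comap.mpr (eq_top_iff.mpr fun f _ => cbdry_mem_cyclesAt K f)
  refine le_antisymm (sup_le ((synorCycles_le K n x).trans inf_le_left) hbd) ?_
  rw [synorCycles_eq_relCompl, relCompl_sup]
  intro c hc
  have hincl : inclMap K x n c ∈ cyclesAt K P n ⊓ chainsIn K P (Set.Iio x) n :=
    ⟨cbdry_coneMap_of_mem_cyclesAt K x hc ▸ cbdry_mem_cyclesAt K _,
      inclMap_mem_chainsIn K subset_rfl c⟩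
  obtain ⟨a, ⟨-, ha⟩, e, he, hea⟩ := h.exists_cycle_sub_mem hincl
  rw [← range_inclMap] at he
  obtain ⟨d, rfl⟩ := he
  have hda : inclMap K x n (c - cbdry K _ n d) = a := by
    rw [map_sub, ← cbdry_mapCGrp, hea, sub_sub_cancel]
  refine Submodule.mem_sup.mpr ⟨c - cbdry K _ n d, ⟨sub_mem hc (cbdry_mem_cyclesAt K d), ?_⟩,
    cbdry K _ n d, ⟨d, rfl⟩, sub_add_cancel _ _⟩
  rwa [SetLike.mem_coe, Submodule.mem_comap, hda]

section Insert
variable {I : Set P} {x : P}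

/-- The component over `x` of the boundary is minus the cone over `∂c`. It lies in `S` only if `∂c`
is one of the chosen cycles, which meet the boundaries trivially. -/
theorem mem_cyclesAt_and_cbdry_mem_idealPart (hI : IsLowerSet I) (hx : x ∉ I)
    (hIio : Set.Iio x ⊆ I) {n : ℕ} {c : CGrp K {y : P // y < x} n} {g : CGrp K P (n + 1)}
    (hg : g ∈ chainsIn K P I (n + 1))
    (hbd : cbdry K P n (coneMap K x n c + g) ∈ idealPart K P (synorPiece K) (insert x I) n) :
    c ∈ cyclesAt K {y : P // y < x} n ∧
      cbdry K P n (coneMap K x n c + g) ∈ idealPart K P (synorPiece K) I n := by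
  cases n with
  | zero => exact ⟨Submodule.mem_top, Submodule.mem_top⟩
  | succ n =>
    rw [idealPart_insert] at hbd
    obtain ⟨_, ⟨t, ht, rfl⟩, b, hb, hsum⟩ := Submodule.mem_sup.mp hbd
    have hcone : coneMap K x n (t + cbdry K _ n c) =
        inclMap K x (n + 1) c + cbdry K P (n + 1) g - b := by
      rw [map_add, cbdry_coneMap_succ] at hsum
      rw [map_add, eq_sub_iff_add_eq, add_right_comm, hsum]
      abel
    have hzero : t + cbdry K _ n c = 0 := by
      apply (map_eq_zero_iff _ (coneMap_injective K x n)).mp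
      refine Submodule.disjoint_def.mp (disjoint_range_coneMap_chainsIn K hx n) _ ⟨_, rfl⟩ ?_
      rw [hcone]
      exact sub_mem (add_mem (inclMap_mem_chainsIn K hIio c) (cbdry_mem_chainsIn K hg))
        (idealPart_synorPiece_le_chainsIn K hI n hb)
    have ht0 : t = 0 :=
      Submodule.disjoint_def.mp (disjoint_synorCycles_boundariesIn K n x) t ht
        ⟨-c, by rw [map_neg, eq_neg_of_add_eq_zero_left hzero]⟩
    rw [ht0, zero_add] at hzero
    rw [ht0, map_zero, zero_add] at hsum
    exact ⟨hzero, hsum ▸ hb⟩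

theorem isRelAcyclic_insert (hI : IsLowerSet I) (hx : x ∉ I) (hIio : Set.Iio x ⊆ I)
    (hacycIio : IsRelAcyclic K (synorPiece K) (Set.Iio x))
    (hacyc : IsRelAcyclic K (synorPiece K) I) :
    IsRelAcyclic K (synorPiece K) (insert x I) := by
  intro n f hf hbd
  have hlow : IsLowerSet (insert x I) := isLowerSet_insert hI hIio
  have hI' : I ⊆ insert x I := Set.subset_insert x I
  rw [chainsIn_succ_eq_biSup K hlow, iSup_insert, ← chainsIn_succ_eq_biSup K hI] at hf
  obtain ⟨_, ⟨c, rfl⟩, g, hg, rfl⟩ := Submodule.mem_sup.mp hf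
  obtain ⟨hc, hbdI⟩ := mem_cyclesAt_and_cbdry_mem_idealPart hI hx hIio hg hbd
  rw [← hacycIio.synorCycles_sup_boundariesIn] at hc
  obtain ⟨t, ht, _, ⟨d, rfl⟩, rfl⟩ := Submodule.mem_sup.mp hc
  have hsplit : coneMap K x n (t + cbdry K _ n d) + g =
      coneMap K x n t + (g + inclMap K x (n + 1) d) -
        cbdry K P (n + 1) (coneMap K x (n + 1) d) := by
    rw [map_add, cbdry_coneMap_succ]
    abel
  have hbase : g + inclMap K x (n + 1) d ∈ idealPart K P (synorPiece K) I (n + 1) ⊔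
      (chainsIn K P I (n + 2)).map (cbdry K P (n + 1)) := by
    refine hacyc n _ (add_mem hg (inclMap_mem_chainsIn K hIio d)) ?_
    rw [hsplit, map_sub, cbdry_cbdry, sub_zero, map_add, cbdry_coneMap_of_mem_synorCycles ht]
      at hbdI
    exact (add_mem_cancel_left (idealPart_mono K _ hIio n (inclMap_mem_idealPart ht))).mp hbdI
  have hconeD : coneMap K x (n + 1) d ∈ chainsIn K P (insert x I) (n + 2) := by
    rw [chainsIn_succ_eq_biSup K hlow, iSup_insert]
    exact Submodule.mem_sup_left ⟨d, rfl⟩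
  rw [hsplit]
  refine sub_mem (add_mem (Submodule.mem_sup_left ?_) ?_)
    (Submodule.mem_sup_right ⟨_, hconeD, rfl⟩)
  · rw [idealPart_insert]
    exact Submodule.mem_sup_left ⟨t, ht, rfl⟩
  · exact sup_le_sup (idealPart_mono K _ hI' _) (Submodule.map_mono (chainsIn_mono K hI' _)) hbase

end Insert

theorem isRelAcyclic_of_forall_Iio [WellFoundedLT P] {J : Set P} (hJ : IsLowerSet J)
    (h : ∀ x ∈ J, IsRelAcyclic K (synorPiece K) (Set.Iio x)) :
    IsRelAcyclic K (synorPiece K) J := by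
  obtain ⟨I, -, hmax⟩ := zorn_subset_nonempty
    {I | I ⊆ J ∧ IsLowerSet I ∧ IsRelAcyclic K (synorPiece K) I}
    (fun c hc hchain hne => ⟨⋃₀ c, ⟨Set.sUnion_subset fun I hI => (hc hI).1,
      isLowerSet_sUnion fun I hI => (hc hI).2.1,
      .sUnion hne hchain.directedOn (fun I hI => (hc hI).2.1) fun I hI => (hc hI).2.2⟩,
      fun _ => Set.subset_sUnion_of_mem⟩)
    ∅ ⟨Set.empty_subset J, isLowerSet_empty, isRelAcyclic_empty K _⟩
  obtain ⟨hIJ, hI, hacyc⟩ := hmax.prop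
  obtain rfl | hssub := hIJ.eq_or_ssubset
  · exact hacyc
  obtain ⟨x, ⟨hxJ, hxI⟩, hmin⟩ :=
    wellFounded_lt.has_min (J \ I) (Set.nonempty_of_ssubset hssub)
  have hIio : Set.Iio x ⊆ I := fun y hy =>
    by_contra fun hyI => hmin y ⟨hJ (le_of_lt hy) hxJ, hyI⟩ hy
  have hinsert : insert x I ⊆ I :=
    hmax.le_of_ge ⟨Set.insert_subset hxJ hIJ, isLowerSet_insert hI hIio,
      isRelAcyclic_insert hI hxI hIio (h x hxJ) hacyc⟩ (Set.subset_insert x I)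
  exact absurd (hinsert (Set.mem_insert x I)) hxI

theorem isRelAcyclic_synorPiece [WellFoundedLT P] {J : Set P} (hJ : IsLowerSet J) :
    IsRelAcyclic K (synorPiece K) J := by
  have hIio (x : P) : IsRelAcyclic K (synorPiece K) (Set.Iio x) := by
    induction x using WellFoundedLT.induction with
    | ind x ih => exact isRelAcyclic_of_forall_Iio (isLowerSet_Iio x) ih
  exact isRelAcyclic_of_forall_Iio hJ fun x _ => hIio x

theorem IsRelAcyclic.finrank_synorPiece {x : P} [Finite {y : P // y < x}]
    (h : IsRelAcyclic K (synorPiece K) (Set.Iio x)) (n : ℕ) :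
    Module.finrank K (synorPiece K n x) =
      Module.finrank K (cyclesAt K {y : P // y < x} n) -
        Module.finrank K (boundariesIn K {y : P // y < x} n) := by
  have hadd := Submodule.finrank_sup_add_finrank_inf_eq (synorCycles K n x)
    (boundariesIn K {y : P // y < x} n)
  rw [h.synorCycles_sup_boundariesIn, (disjoint_synorCycles_boundariesIn K n x).eq_bot,
    finrank_bot, add_zero] at hadd
  rw [synorPiece, hadd, Nat.add_sub_cancel]
  exact ((synorCycles K n x).equivMapOfInjective _ (coneMap_injective K x n)).finrank_eq.symm

end Construction

theorem synorComplex_exists_general (P : Type) [PartialOrder P]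
    (hP : ∀ x : P, (Set.Iio x).Finite) : Nonempty (SynorComplex K P) := by
  have : WellFoundedLT P := StrictMono.wellFoundedLT (f := fun x => (Set.Iio x).ncard)
    fun x y h => Set.ncard_lt_ncard (Set.Iio_ssubset_Iio h) (hP y)
  have hacyc {J : Set P} (hJ : IsLowerSet J) : IsRelAcyclic K (synorPiece K) J :=
    isRelAcyclic_synorPiece hJ
  exact ⟨{
    S := synorPiece K
    graded := fun n x => LinearMap.map_le_range.trans (range_coneMap K x n).le
    strict := by
      rintro n x _ ⟨t, ht, rfl⟩
      rw [cbdry_coneMap_of_mem_synorCycles ht]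
      exact inclMap_mem_idealPart ht
    dim_eq := fun n x =>
      have : Finite {y : P // y < x} := (hP x).to_subtype
      (hacyc (isLowerSet_Iio x)).finrank_synorPiece n
    quasiIso := fun J hJ n => ⟨fun _ => (hacyc hJ).exists_cycle_sub_mem,
      fun _ => (hacyc hJ).mem_map_cbdry_idealPart⟩ }⟩

/-- For every finite poset `P` there exists a synor complex for `P`:
a strictly `P`-graded complex together with an injective `P`-graded chain map into the
reduced simplicial chain complex of the order complex of `P` satisfying (S1) and (S2)
(equivalently, identifying the complex with its image, a strictly `P`-graded subcomplex
of `C̃_*(P)` satisfying (S1) and (S2)). -/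
theorem synorComplex_exists (P : Type) [PartialOrder P] [Fintype P] :
    Nonempty (SynorComplex K P) :=
  synorComplex_exists_general K P fun x => Set.toFinite (Set.Iio x)

end
end

section
/- Let P be a finite poset and S_*(P) ⊆ C̃_*(P) a synor complex for P (identified with its image under φ). If ζ ∈ S_m(P) is a cycle and c is an order chain with m+1 elements, then [ζ : c]_j = 0 for every j = 0, …, m; that is, for each position j, the sum of the coefficients in ζ of the order chains that agree with c in all positions except possibly position j is zero. -/
open Finsupp

noncomputable section

variable (K : Type) [Field K]

/-!
Write `d_k` for deletion of the `k`-th entry.  Since `[ζ : c]_j` is the coefficient of `d_j c` in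
`d_j ζ`, the claim is that all faces `d_j ζ` of a cycle `ζ` in a strictly graded subcomplex vanish.

Let `f` lie in the piece over `x`, in positive degree.  In `∂ f = d_0 f - ∑ (-1)^k d_{k+1} f`, the
chains in `∂ f` and `d_0 f` have largest element below `x`, whereas those in the sum have largest
element `x`.  Hence the sum is zero and `d_0 f = ∂ f` lies in the subcomplex; applying `d_0` to the sum shows that `d_0 f` is a
cycle, so by induction all its faces vanish.  Now `d_0 d_{k+1} f = d_k d_0 f = 0`, and `d_0` is
injective on chains with largest element `x`, so `d_{k+1} f = 0`.  Finally `∂ ζ = d_0 ζ` for any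
`ζ` whose faces other than `d_0 ζ` vanish.
-/

theorem mapDomain_apply_eq_finsum_mem {α β M : Type*} [AddCommMonoid M] (g : α → β) (v : α →₀ M)
    (b : β) : mapDomain g v b = ∑ᶠ a ∈ {a | g a = b}, v a := by
  classical
  rw [finsum_mem_eq_sum_filter _ _ v.hasFiniteSupport]
  simp [mapDomain, Finsupp.sum, Finsupp.finsetSum_apply, Finsupp.single_apply, Finset.sum_filter]

section Faces

variable {K} {P : Type} [Preorder P] {n : ℕ}

theorem odel_eq_odel_iff {j : Fin (n + 1)} {c c' : OChain P (n + 1)} :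
    odel P j c = odel P j c' ↔ ∀ r, r ≠ j → c.1 r = c'.1 r := by
  refine Subtype.ext_iff.trans ?_
  simp [odel, funext_iff, Fin.forall_iff_succAbove j]

theorem odel_zero_odel_succ (k : Fin (n + 1)) (c : OChain P (n + 2)) :
    odel P 0 (odel P k.succ c) = odel P k (odel P 0 c) :=
  Subtype.ext <| funext fun i => by simp [odel]

variable (K P) in
/-- The `k`-th face operator `d_k` of the simplicial chain complex: the linear extension of the
deletion of the `k`-th entry. -/
def faceMap (k : Fin (n + 1)) : CGrp K P (n + 1) →ₗ[K] CGrp K P n :=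
  lmapDomain K K (odel P k)

theorem faceMap_apply_odel (j : Fin (n + 1)) (f : CGrp K P (n + 1)) (c : OChain P (n + 1)) :
    faceMap K P j f (odel P j c) = ∑ᶠ c' ∈ {c' | ∀ r, r ≠ j → c'.1 r = c.1 r}, f c' := by
  simp only [faceMap, lmapDomain_apply, mapDomain_apply_eq_finsum_mem, odel_eq_odel_iff]

theorem faceMap_zero_faceMap_succ (k : Fin (n + 1)) (f : CGrp K P (n + 2)) :
    faceMap K P 0 (faceMap K P k.succ f) = faceMap K P k (faceMap K P 0 f) := by
  simp only [faceMap, lmapDomain_apply, ← mapDomain_comp]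
  exact congrArg (mapDomain · f) (funext (odel_zero_odel_succ k))

theorem cbdry_eq_sum_faceMap :
    cbdry K P n = ∑ k : Fin (n + 1), (-1 : K) ^ (k : ℕ) • faceMap K P k := by
  ext c : 2
  simp [cbdry, faceMap]

variable (K P n) in
/-- The alternating sum `∑ (-1)^k d_{k+1}` of the faces that keep the largest element, indexed so
that `∂ = d_0 - tailBdry`. -/
def tailBdry : CGrp K P (n + 1) →ₗ[K] CGrp K P n :=
  ∑ k : Fin n, (-1 : K) ^ (k : ℕ) • faceMap K P k.succ

theorem cbdry_eq_faceMap_zero_sub_tailBdry : cbdry K P n = faceMap K P 0 - tailBdry K P n := by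
  refine LinearMap.ext fun f => ?_
  simp [cbdry_eq_sum_faceMap, tailBdry, Fin.sum_univ_succ, pow_succ, sub_eq_add_neg]

theorem faceMap_zero_tailBdry (f : CGrp K P (n + 2)) :
    faceMap K P 0 (tailBdry K P (n + 1) f) = cbdry K P n (faceMap K P 0 f) := by
  simp [cbdry_eq_sum_faceMap, tailBdry, faceMap_zero_faceMap_succ]

theorem faceMap_eq_zero_of_cbdry_eq_zero {f : CGrp K P (n + 1)}
    (hsucc : ∀ k : Fin n, faceMap K P k.succ f = 0) (hf : cbdry K P n f = 0) (j : Fin (n + 1)) :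
    faceMap K P j f = 0 := by
  have htail : tailBdry K P n f = 0 := by simp [tailBdry, hsucc]
  have hzero : faceMap K P 0 f = 0 := by
    simpa [cbdry_eq_faceMap_zero_sub_tailBdry, htail] using hf
  exact Fin.cases hzero hsucc j

end Faces

section Top

variable {K} {P : Type} [Preorder P] {n : ℕ} {x : P}

variable (K n) in
/-- The space of chains in homological degree `n` all of whose order chains have their largest
element in `J`; for `J = {x}` it is the graded piece `C̃_n(P)^{(x)}`. -/
def chainsWithTopIn (J : Set P) : Submodule K (CGrp K P (n + 1)) :=
  supported K K {c | c.1 0 ∈ J}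

theorem disjoint_chainsWithTopIn {J J' : Set P} (h : Disjoint J J') :
    Disjoint (chainsWithTopIn K n J) (chainsWithTopIn K n J') :=
  disjoint_supported_supported (h.preimage fun c : OChain P (n + 1) => c.1 0)

theorem chainsWithTopIn_mono {J J' : Set P} (h : J ⊆ J') :
    chainsWithTopIn K n J ≤ chainsWithTopIn K n J' :=
  supported_mono fun _ hc => h hc

theorem faceMap_succ_mem_chainsWithTopIn {J : Set P} {f : CGrp K P (n + 2)}
    (hf : f ∈ chainsWithTopIn K (n + 1) J) (k : Fin (n + 1)) :
    faceMap K P k.succ f ∈ chainsWithTopIn K n J := by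
  refine supported_comap_lmapDomain K K (odel P k.succ) _ (supported_mono (fun c hc => ?_) hf)
  simpa [odel] using hc

theorem tailBdry_mem_chainsWithTopIn {J : Set P} {f : CGrp K P (n + 2)}
    (hf : f ∈ chainsWithTopIn K (n + 1) J) :
    tailBdry K P (n + 1) f ∈ chainsWithTopIn K n J := by
  simpa only [tailBdry, LinearMap.sum_apply, LinearMap.smul_apply] using
    Submodule.sum_mem _ fun k _ =>
      Submodule.smul_mem _ _ (faceMap_succ_mem_chainsWithTopIn hf k)

theorem faceMap_zero_mem_chainsWithTopIn_Iio {f : CGrp K P (n + 2)}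
    (hf : f ∈ chainsWithTopIn K (n + 1) {x}) :
    faceMap K P 0 f ∈ chainsWithTopIn K n (Set.Iio x) := by
  refine supported_comap_lmapDomain K K (odel P 0) _ (supported_mono ?_ hf)
  rintro c rfl
  exact c.2 (Fin.succ_pos 0)

theorem disjoint_chainsWithTopIn_ker_faceMap_zero :
    Disjoint (chainsWithTopIn K n {x}) (faceMap K P 0).ker := by
  refine lmapDomain_disjoint_ker K K _ fun c hc c' hc' h => Subtype.ext <| funext fun i => ?_
  obtain rfl | hi := eq_or_ne i 0
  · exact hc.trans hc'.symm
  · exact odel_eq_odel_iff.mp h i hi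

theorem tailBdry_eq_zero_of_cbdry_mem {f : CGrp K P (n + 2)}
    (hf : f ∈ chainsWithTopIn K (n + 1) {x})
    (hbdry : cbdry K P (n + 1) f ∈ chainsWithTopIn K n (Set.Iio x)) :
    tailBdry K P (n + 1) f = 0 := by
  have hlow : tailBdry K P (n + 1) f ∈ chainsWithTopIn K n (Set.Iio x) := by
    simpa [cbdry_eq_faceMap_zero_sub_tailBdry] using
      Submodule.sub_mem _ (faceMap_zero_mem_chainsWithTopIn_Iio hf) hbdry
  have hdisj : Disjoint {x} (Set.Iio x) := by simp
  exact Submodule.disjoint_def.mp (disjoint_chainsWithTopIn hdisj) _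
    (tailBdry_mem_chainsWithTopIn hf) hlow

end Top

section StrictlyGraded

variable {K} {P : Type} [Preorder P]

/-- A family of graded pieces `S_n^{(x)}` spans a strictly `P`-graded subcomplex of the simplicial
chain complex of `P`.  Nothing is asked of `∂` on degree `0`, where it takes values in
`C̃₋₁ = K`. -/
structure IsStrictlyGraded (S : (n : ℕ) → P → Submodule K (CGrp K P (n + 1))) : Prop where
  le_chainsWithTopIn : ∀ n x, S n x ≤ chainsWithTopIn K n {x}
  cbdry_mem : ∀ n x, ∀ f ∈ S (n + 1) x, cbdry K P (n + 1) f ∈ ⨆ y ∈ Set.Iio x, S n y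

namespace IsStrictlyGraded

variable {S : (n : ℕ) → P → Submodule K (CGrp K P (n + 1))} {n : ℕ} {x : P}

theorem tailBdry_eq_zero (hS : IsStrictlyGraded S) {f : CGrp K P (n + 2)} (hf : f ∈ S (n + 1) x) :
    tailBdry K P (n + 1) f = 0 := by
  have hlow : ⨆ y ∈ Set.Iio x, S n y ≤ chainsWithTopIn K n (Set.Iio x) :=
    iSup₂_le fun y hy => (hS.le_chainsWithTopIn n y).trans
      (chainsWithTopIn_mono (Set.singleton_subset_iff.mpr hy))
  exact tailBdry_eq_zero_of_cbdry_mem (hS.le_chainsWithTopIn _ x hf)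
    (hlow (hS.cbdry_mem n x f hf))

theorem faceMap_zero_mem (hS : IsStrictlyGraded S) {f : CGrp K P (n + 2)} (hf : f ∈ S (n + 1) x) :
    faceMap K P 0 f ∈ ⨆ y, S n y := by
  have hface : cbdry K P (n + 1) f = faceMap K P 0 f := by
    simp [cbdry_eq_faceMap_zero_sub_tailBdry, hS.tailBdry_eq_zero hf]
  exact hface ▸ iSup₂_le_iSup (· ∈ Set.Iio x) (S n) (hS.cbdry_mem n x f hf)

theorem cbdry_faceMap_zero (hS : IsStrictlyGraded S) {f : CGrp K P (n + 2)}
    (hf : f ∈ S (n + 1) x) : cbdry K P n (faceMap K P 0 f) = 0 := by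
  rw [← faceMap_zero_tailBdry, hS.tailBdry_eq_zero hf, map_zero]

theorem faceMap_succ_eq_zero (hS : IsStrictlyGraded S) {f : CGrp K P (n + 1)}
    (hf : f ∈ ⨆ x, S n x) (k : Fin n) : faceMap K P k.succ f = 0 := by
  induction n with
  | zero => exact k.elim0
  | succ n ih =>
    suffices ⨆ x, S (n + 1) x ≤ (faceMap K P k.succ).ker from this hf
    refine iSup_le fun x g hg => ?_
    have hface : faceMap K P 0 (faceMap K P k.succ g) = 0 := by
      rw [faceMap_zero_faceMap_succ]
      exact faceMap_eq_zero_of_cbdry_eq_zero (ih (hS.faceMap_zero_mem hg))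
        (hS.cbdry_faceMap_zero hg) k
    exact Submodule.disjoint_def.mp disjoint_chainsWithTopIn_ker_faceMap_zero _
      (faceMap_succ_mem_chainsWithTopIn (hS.le_chainsWithTopIn _ x hg) k) hface

theorem faceMap_eq_zero_of_mem_cyclesAt (hS : IsStrictlyGraded S) {ζ : CGrp K P (n + 1)}
    (hcyc : ζ ∈ cyclesAt K P (n + 1)) (hζ : ζ ∈ ⨆ x, S n x) (j : Fin (n + 1)) :
    faceMap K P j ζ = 0 :=
  faceMap_eq_zero_of_cbdry_eq_zero (hS.faceMap_succ_eq_zero hζ) hcyc j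

end IsStrictlyGraded

end StrictlyGraded

variable {K} in
theorem SynorComplex.isStrictlyGraded {P : Type} [PartialOrder P] (σ : SynorComplex K P) :
    IsStrictlyGraded σ.S :=
  ⟨σ.graded, σ.strict⟩

theorem synor_cycle_coefficient_sum_general (P : Type) [Preorder P]
    (S : (n : ℕ) → P → Submodule K (CGrp K P (n + 1))) (hS : IsStrictlyGraded S) (m : ℕ)
    (ζ : CGrp K P (m + 1)) (hcyc : ζ ∈ cyclesAt K P (m + 1)) (hζ : ζ ∈ ⨆ x, S m x)
    (c : OChain P (m + 1)) (j : Fin (m + 1)) :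
    ∑ᶠ c' ∈ {c' : OChain P (m + 1) | ∀ r : Fin (m + 1), r ≠ j → c'.1 r = c.1 r},
      ζ c' = 0 := by
  rw [← faceMap_apply_odel, hS.faceMap_eq_zero_of_mem_cyclesAt hcyc hζ, Finsupp.zero_apply]

/-- Let `P` be a finite poset and `S_*(P) ⊆ C̃_*(P)` a synor complex.
If `ζ ∈ S_m(P)` is a cycle and `c` an order chain with `m+1` elements, then
`[ζ : c]_j = 0` for every `j = 0, …, m`: for each position `j`, the sum of the
coefficients in `ζ` of the order chains agreeing with `c` in all positions except
possibly position `j` is zero. -/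
theorem synor_cycle_coefficient_sum (P : Type) [PartialOrder P] [Fintype P]
    (σ : SynorComplex K P) (m : ℕ) (ζ : CGrp K P (m + 1))
    (hcyc : ζ ∈ cyclesAt K P (m + 1))
    (hS : ζ ∈ idealPart K P σ.S Set.univ (m + 1))
    (c : OChain P (m + 1)) (j : Fin (m + 1)) :
    ∑ᶠ c' ∈ {c' : OChain P (m + 1) | ∀ r : Fin (m + 1), r ≠ j → c'.1 r = c.1 r},
      ζ c' = 0 := by
  exact synor_cycle_coefficient_sum_general K P σ.S σ.isStrictlyGraded m ζ hcyc
    (by simpa [idealPart] using hS) c j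

end
end
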